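/- arXiv:2111.04387 — 4 statements merged into one kernel-verified Lean document; each statement's English description precedes it below -/
import Mathlib

section
/- Let m ≥ 3 be an odd integer. There exists a finite set of primes {p₁, p₂, ..., pₙ} such that for every odd integer t ≥ 3 that is relatively prime to p₁p₂⋯pₙ, every prime p dividing t divides the class number of ℚ(√(1 − 2m^t)). In particular, if t ≥ 3 is an odd square-free integer relatively prime to p₁p₂⋯pₙ, then t divides the class number of ℚ(√(1 − 2m^t)). -/
open Polynomial NumberField

/-- A fixed choice of complex square root of the integer `d`. -/
noncomputable def sqrtC (d : ℤ) : ℂ := (d : ℂ) ^ ((1 : ℂ) / 2)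

lemma sqrtC_sq (d : ℤ) : sqrtC d ^ 2 = (d : ℂ) := by
  unfold sqrtC
  rcases eq_or_ne (d : ℂ) 0 with h | h
  · rw [h, Complex.zero_cpow (by norm_num : (1 : ℂ) / 2 ≠ 0)]
    simp
  · rw [pow_two, ← Complex.cpow_add _ _ h]
    norm_num

lemma isIntegral_sqrtC (d : ℤ) : IsIntegral ℚ (sqrtC d) := by
  refine ⟨X ^ 2 - C (d : ℚ), monic_X_pow_sub_C _ two_ne_zero, ?_⟩
  have : (Polynomial.aeval (sqrtC d)) (X ^ 2 - C (d : ℚ)) = 0 := by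
    simp [sqrtC_sq]
  simpa [Polynomial.aeval_def] using this

/-- The (number) field `ℚ(√d)`, realized as a subfield of `ℂ`. -/
noncomputable def Qsqrt (d : ℤ) : IntermediateField ℚ ℂ :=
  IntermediateField.adjoin ℚ {sqrtC d}

instance (d : ℤ) : FiniteDimensional ℚ (Qsqrt d) :=
  IntermediateField.adjoin.finiteDimensional (isIntegral_sqrtC d)

instance (d : ℤ) : NumberField (Qsqrt d) := ⟨⟩




/-- One-step composition data for elements `1 + A + B √D`, `D = -1 - 2T`. -/
lemma stepMul (T : ℤ) (b : ℕ) (A B A' B' f g f' g' : ℤ)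
    (hE : A + (-1 - 2*T) * B = 2^(b+1) * T^2 * f) (hB : B = 2^(b+2) * T * g)
    (hE' : A' + (-1 - 2*T) * B' = 2^(b+1) * T^2 * f') (hB' : B' = 2^(b+2) * T * g') :
    ∃ A'' B'' f'' g'' : ℤ, (⟨1 + A, B⟩ * ⟨1 + A', B'⟩ : Zsqrtd (-1 - 2*T)) = ⟨1 + A'', B''⟩ ∧
      A'' + (-1 - 2*T) * B'' = 2^(b+1) * T^2 * f'' ∧ B'' = 2^(b+2) * T * g'' ∧
      ∃ c, f'' = f + f' + 2 * c := by
  refine ⟨A + A' + A*A' + (-1 - 2*T)*B*B', B + B' + A*B' + A'*B,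
    f + f' + 2 * (2^b * T^2 * f * f' + (-1-2*T) * (1+T) * 2^(b+3) * g * g'),
    g + g' + A * g' + A' * g, ?_, ?_, ?_, _, rfl⟩
  · ext <;> simp <;> ring
  · have hA : A = 2^(b+1) * T^2 * f - (-1 - 2*T) * B := by linear_combination hE
    have hA' : A' = 2^(b+1) * T^2 * f' - (-1 - 2*T) * B' := by linarith
    rw [hA, hA', hB, hB']
    ring
  · rw [hB, hB']; ring

lemma stepDouble (T : ℤ) (hT : Even T) (b : ℕ) (A B f g : ℤ)
    (hE : A + (-1 - 2*T) * B = 2^(b+1) * T^2 * f) (hB : B = 2^(b+2) * T * g) (hf : Odd f) :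
    ∃ A'' B'' f'' g'' : ℤ, (⟨1 + A, B⟩ * ⟨1 + A, B⟩ : Zsqrtd (-1 - 2*T)) = ⟨1 + A'', B''⟩ ∧
      A'' + (-1 - 2*T) * B'' = 2^(b+2) * T^2 * f'' ∧ B'' = 2^(b+3) * T * g'' ∧ Odd f'' := by
  obtain ⟨u, rfl⟩ := hT
  refine ⟨2*A + A*A + (-1 - 2*(u+u))*B*B, 2*B*(1+A),
    f + 2 * (2^b * (u * (u+u)) * f * f + (-1-2*(u+u)) * (1+(u+u)) * 2^(b+2) * g * g),
    g * (1 + A), ?_, ?_, ?_, ?_⟩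
  · ext <;> simp <;> ring
  · have hA : A = 2^(b+1) * (u+u)^2 * f - (-1 - 2*(u+u)) * B := by linarith
    rw [hA, hB]
    ring
  · rw [hB]; ring
  · exact hf.add_even (even_two_mul _)

lemma base4 (T : ℤ) :
    ((⟨-T, 1⟩ : Zsqrtd (-1 - 2*T)) ^ 4) =
      ⟨1 + (4*T - 2*T^2 - 12*T^3 + T^4), 4*T*(1 + 2*T - T^2)⟩ := by
  rw [show (4:ℕ) = 1+1+1+1 from rfl, pow_add, pow_add, pow_add, pow_one]
  ext <;> simp <;> ring

lemma pow2 (T : ℤ) (hT : Even T) (b : ℕ) :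
    ∃ A B f g : ℤ, ((⟨-T, 1⟩ : Zsqrtd (-1 - 2*T)) ^ (4 * 2^b)) = ⟨1 + A, B⟩ ∧
      A + (-1 - 2*T) * B = 2^(b+1) * T^2 * f ∧ B = 2^(b+2) * T * g ∧ Odd f := by
  induction b with
  | zero =>
    obtain ⟨u, rfl⟩ := hT
    refine ⟨4*(u+u) - 2*(u+u)^2 - 12*(u+u)^3 + (u+u)^4, 4*(u+u)*(1 + 2*(u+u) - (u+u)^2), -9 - 12*(u+u) + 9 * u * (u+u),
      1 + 2*(u+u) - (u+u)^2, ?_, ?_, ?_, ?_⟩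
    · rw [pow_zero, mul_one, base4]
    · ring
    · ring
    · exact ⟨-5 - 12*u + 9*u*u, by ring⟩
  | succ b ih =>
    obtain ⟨A, B, f, g, h, hE, hB, hf⟩ := ih
    obtain ⟨A', B', f', g', h', hE', hB', hf'⟩ := stepDouble T hT b A B f g hE hB hf
    refine ⟨A', B', f', g', ?_, hE', hB', hf'⟩
    rw [← h', ← h, ← pow_add]
    congr 1; ring

lemma pow2w (T : ℤ) (hT : Even T) (b w : ℕ) :
    ∃ A B f g : ℤ, ((⟨-T, 1⟩ : Zsqrtd (-1 - 2*T)) ^ (4 * 2^b * w)) = ⟨1 + A, B⟩ ∧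
      A + (-1 - 2*T) * B = 2^(b+1) * T^2 * f ∧ B = 2^(b+2) * T * g ∧ (Odd w → Odd f) := by
  obtain ⟨A₁, B₁, f₁, g₁, h₁, hE₁, hB₁, hf₁⟩ := pow2 T hT b
  suffices H : ∃ A B f g : ℤ, ((⟨-T, 1⟩ : Zsqrtd (-1 - 2*T)) ^ (4 * 2^b * w)) = ⟨1 + A, B⟩ ∧
      A + (-1 - 2*T) * B = 2^(b+1) * T^2 * f ∧ B = 2^(b+2) * T * g ∧ ∃ c, f = w * f₁ + 2 * c by
    obtain ⟨A, B, f, g, h, hE, hB, c, hc⟩ := H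
    refine ⟨A, B, f, g, h, hE, hB, fun hw => ?_⟩
    rw [hc]
    have : Odd (w : ℤ) := by exact_mod_cast hw
    exact (this.mul hf₁).add_even (even_two_mul _)
  induction w with
  | zero => exact ⟨0, 0, 0, 0, by simp; ext <;> simp, by simp, by simp, 0, by simp⟩
  | succ w ih =>
    obtain ⟨A, B, f, g, h, hE, hB, c, hc⟩ := ih
    obtain ⟨A', B', f', g', h', hE', hB', c', hc'⟩ :=
      stepMul T b A B A₁ B₁ f g f₁ g₁ hE hB hE₁ hB₁
    refine ⟨A', B', f', g', ?_, hE', hB', c + c', ?_⟩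
    · rw [← h', ← h, ← h₁, ← pow_add]; congr 1
    · rw [hc', hc]; push_cast; ring

/-- Key 2-adic lemma. -/
lemma key (T : ℤ) (hT : Even T) (hT0 : T ≠ 0) (r : ℕ) (hr : r ≠ 0) (ε : ℤ)
    (hε : ε = 1 ∨ ε = -1)
    (h3 : r % 4 = 1 → ε = -1) (h7 : r % 4 = 3 → ε = 1)
    (h : ((⟨1, 1⟩ : Zsqrtd (-1 - 2*T)) * ⟨-T, 1⟩ ^ r).re = ε) : False := by
  have hq : r = 4 * (r / 4) + r % 4 := by omega
  have hlt : r % 4 < 4 := Nat.mod_lt _ (by norm_num)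
  generalize hi : r % 4 = i at *
  generalize r / 4 = q at *
  obtain ⟨A, B, f, g, hp, hE, hB, -⟩ := pow2w T hT 0 q
  rw [pow_zero, mul_one] at hp
  obtain ⟨u, hu⟩ := hT
  interval_cases i
  · obtain ⟨b, w, hw, hqw⟩ := Nat.exists_eq_two_pow_mul_odd (n := q) (by omega)
    obtain ⟨A, B, f, g, hp, hE, hB, hf⟩ := pow2w T ⟨u, hu⟩ b w
    have hf := hf hw
    rw [show r = 4 * 2^b * w by rw [hq, hqw]; ring, hp] at h
    simp at h
    have h' : 2^(b+1) * T^2 * f = ε - 1 := by rw [← hE, ← h]; ring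
    rcases hε with rfl | rfl
    · have : f = 0 := by simpa [hT0] using h'
      rw [this] at hf; simp at hf
    · have : 4 * (2^(b+1) * u^2 * f) = -2 := by rw [hu] at h'; linarith
      omega
  · rw [hq, pow_add, hp, h3 rfl] at h
    simp at h
    have hA : A = 2 * T^2 * f - (-1 - 2*T) * B := by linear_combination hE
    have h0 : T * (2 * ((T * f + 2 * (1 + 2*T) * g) * (-1 - 3*T) + (-1 - 2*T) * 2 * g * (1 - T) - 2)
        + 1) = 0 := by
      rw [hA, hB] at h
      linear_combination h
    rcases mul_eq_zero.mp h0 with h0 | h0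
    · exact hT0 h0
    · omega
  · rw [hq, pow_add, hp] at h
    simp [pow_two] at h
    have hA : A = 2 * T^2 * f - (-1 - 2*T) * B := by linear_combination hE
    have h0 : T^2 * (2 * ((5*T^2 - 1) * f - (-1 - 2*T) * 8 * g * (T+1) + 2) + 1) = ε + 1 := by
      rw [hA, hB] at h
      linear_combination h
    rcases hε with rfl | rfl
    · rw [hu] at h0
      have h1 : 4 * (u^2 * (2 * ((5*(u+u)^2 - 1) * f - (-1 - 2*(u+u)) * 8 * g * ((u+u)+1) + 2) + 1))
        = 2 := by linear_combination h0
      omega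
    · rcases mul_eq_zero.mp (h0.trans (by norm_num)) with h0 | h0
      · exact hT0 (pow_eq_zero_iff two_ne_zero |>.mp h0)
      · omega
  · rw [hq, pow_add, hp, h7 rfl] at h
    simp [pow_succ] at h
    have hA : A = 2 * T^2 * f - (-1 - 2*T) * B := by linear_combination hE
    have h0 : T * (2 * ((T * f + 2 * (1 + 2*T) * g) * (1 + 7*T + 7*T^2 - 7*T^3)
        + (-1 - 2*T) * 2 * g * (-1 + T + 9*T^2 - T^3) + 3 + u * (7 - 7 * T)) + 1) = 0 := by
      rw [hA, hB] at h
      linear_combination h + T * (7*T - 7) * hu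
    rcases mul_eq_zero.mp h0 with h0 | h0
    · exact hT0 h0
    · omega

lemma sign_two (p r : ℕ) (hp : p.Prime) (hpr : p = 2 * r + 1) (ε : ℤ) (hε : ε = 1 ∨ ε = -1)
    (h : (p : ℤ) ∣ 2 ^ r * ε - 1) : (r % 4 = 1 → ε = -1) ∧ (r % 4 = 3 → ε = 1) := by
  have := Fact.mk hp
  have hr1 : 1 < p := hp.one_lt
  have hp2 : p ≠ 2 := by omega
  have h2 : (2 : ZMod p) ≠ 0 := by
    intro h0
    have : ((2 : ℕ) : ZMod p) = 0 := by exact_mod_cast h0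
    rw [ZMod.natCast_eq_zero_iff] at this
    exact hp2 (((Nat.prime_dvd_prime_iff_eq hp Nat.prime_two).mp this))
  have e1 := ZMod.euler_criterion p h2
  have e2 := ZMod.exists_sq_eq_two_iff (p := p) hp2
  have hd : p / 2 = r := by omega
  rw [hd] at e1
  have h' : (2 : ZMod p) ^ r * (ε : ZMod p) = 1 := by
    have := (ZMod.intCast_zmod_eq_zero_iff_dvd (2 ^ r * ε - 1) p).mpr h
    push_cast at this
    linear_combination this
  have hne : (2 : ZMod p) ^ r = 1 ↔ ε = 1 := by
    constructor
    · intro h1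
      rcases hε with h3 | h3
      · exact h3
      · exfalso
        rw [h1, h3] at h'
        push_cast at h'
        apply h2
        linear_combination -h'
    · rintro rfl
      simpa using h'
  constructor
  · intro h4
    rcases hε with h3 | h3
    · have := e2.mp (e1.mpr (hne.mpr h3))
      omega
    · exact h3
  · intro h4
    exact hne.mp (e1.mp (e2.mpr (by omega)))

lemma re_pow_prime (D : ℤ) (p r : ℕ) (hp : p.Prime) (hpr : p = 2 * r + 1) :
    (p : ℤ) ∣ ((⟨1, 1⟩ : Zsqrtd D) ^ p).re - 1 := by
  obtain ⟨x, hx⟩ := exists_add_pow_prime_eq hp (1 : Zsqrtd D) Zsqrtd.sqrtd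
  have h1 : (⟨1, 1⟩ : Zsqrtd D) = 1 + Zsqrtd.sqrtd := by ext <;> simp
  have h2 : (Zsqrtd.sqrtd : Zsqrtd D) ^ p = ((D ^ r : ℤ) : Zsqrtd D) * Zsqrtd.sqrtd := by
    rw [hpr, pow_succ, pow_mul, pow_two, Zsqrtd.dmuld]; push_cast; rfl
  rw [h1, hx, h2, mul_assoc, mul_assoc]
  refine ⟨(1 * (Zsqrtd.sqrtd * x)).re, ?_⟩
  rw [Zsqrtd.re_add, Zsqrtd.re_add, Zsqrtd.re_smul]
  simp

lemma key2 (M : ℤ) (hM : Odd M) (hM1 : 1 < M) (p r : ℕ) (hp : p.Prime) (hpr : p = 2 * r + 1) (ε : ℤ)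
    (hε : ε = 1 ∨ ε = -1) (h : ((⟨1, 1⟩ : Zsqrtd (1 - 2 * M)) ^ p).re = 2 ^ r * ε) : False := by
  obtain ⟨T, rfl⟩ : ∃ T, M = 1 + T := ⟨M - 1, by ring⟩
  have hT : Even T := by
    have := hM.sub_odd odd_one
    simpa using this
  have hD : (1 - 2 * (1 + T)) = -1 - 2 * T := by ring
  rw [hD] at h
  have hs := re_pow_prime (-1 - 2*T) p r hp hpr
  rw [h] at hs
  obtain ⟨h3, h7⟩ := sign_two p r hp hpr ε hε hs
  have hr : r ≠ 0 := by rintro rfl; simp at hpr; exact hp.one_lt.ne' hpr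
  refine key T hT (by omega) r hr ε hε h3 h7 ?_
  have h2 : (⟨1, 1⟩ : Zsqrtd (-1 - 2*T)) ^ 2 = ((2 : ℤ) : Zsqrtd _) * ⟨-T, 1⟩ := by
    rw [pow_two]; ext <;> simp <;> ring
  rw [hpr, pow_succ, pow_mul, h2, mul_pow, mul_assoc, ← Int.cast_pow, Zsqrtd.re_smul] at h
  rw [mul_comm (⟨1, 1⟩ : Zsqrtd (-1 - 2*T))]
  exact mul_left_cancel₀ (pow_ne_zero r two_ne_zero) h

lemma dvd_re (D a : ℤ) (r : ℕ) : a ∣ ((⟨a, 1⟩ : Zsqrtd D) ^ (2 * r + 1)).re := by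
  induction r with
  | zero => simp
  | succ r ih =>
    obtain ⟨c, hc⟩ := ih
    have h2 : (⟨a, 1⟩ : Zsqrtd D) ^ 2 = ⟨a * a + D, 2 * a⟩ := by
      rw [pow_two]; ext <;> simp; ring
    rw [show 2 * (r + 1) + 1 = (2 * r + 1) + 2 by ring, pow_add, h2, Zsqrtd.re_mul, hc]
    exact ⟨c * (a * a + D) + 2 * D * ((⟨a, 1⟩ : Zsqrtd D) ^ (2 * r + 1)).im, by ring⟩

lemma re_sqrtC (D : ℤ) (hD : D < 0) : (sqrtC D).re = 0 := by
  have h := sqrtC_sq D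
  have h1 := congrArg Complex.re h
  have h2 := congrArg Complex.im h
  simp [pow_two] at h1 h2
  have hD' : (D : ℝ) < 0 := by exact_mod_cast hD
  have h3 : (sqrtC D).re * (sqrtC D).im = 0 := by linarith
  rcases mul_eq_zero.mp h3 with h3 | h3
  · exact h3
  · rw [h3] at h1
    nlinarith [mul_self_nonneg (sqrtC D).re]

lemma conj_sqrtC (D : ℤ) (hD : D < 0) : (starRingEnd ℂ) (sqrtC D) = - sqrtC D := by
  apply Complex.ext <;> simp [re_sqrtC D hD]

lemma mem_form (D : ℤ) (z : ℂ) (hz : z ∈ Qsqrt D) : ∃ x y : ℚ, z = x + y * sqrtC D := by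
  have h : z ∈ (Qsqrt D).toSubalgebra := hz
  rw [Qsqrt, IntermediateField.adjoin_simple_toSubalgebra_of_isAlgebraic
    (isIntegral_sqrtC D).isAlgebraic] at h
  clear hz
  induction h using Algebra.adjoin_induction with
  | mem x hx =>
    rw [Set.mem_singleton_iff] at hx
    exact ⟨0, 1, by simp [hx]⟩
  | algebraMap r => exact ⟨r, 0, by simp⟩
  | add a b _ _ ha hb =>
    obtain ⟨x, y, rfl⟩ := ha
    obtain ⟨x', y', rfl⟩ := hb
    exact ⟨x + x', y + y', by push_cast; ring⟩
  | mul a b _ _ ha hb =>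
    obtain ⟨x, y, rfl⟩ := ha
    obtain ⟨x', y', rfl⟩ := hb
    refine ⟨x * x' + y * y' * D, x * y' + x' * y, ?_⟩
    push_cast
    linear_combination (y : ℂ) * y' * sqrtC_sq D

lemma rat_int (q : ℚ) (h : IsIntegral ℤ (q : ℂ)) : ∃ n : ℤ, q = n := by
  have h1 : IsIntegral ℤ (algebraMap ℚ ℂ q) := by simpa using h
  rw [isIntegral_algebraMap_iff (algebraMap ℚ ℂ).injective] at h1
  obtain ⟨n, hn⟩ := IsIntegrallyClosed.isIntegral_iff.mp h1
  exact ⟨n, by simpa using hn.symm⟩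

lemma integral_coords (D : ℤ) (hD : D < 0) (x y : ℚ) (h : IsIntegral ℤ ((x : ℂ) + y * sqrtC D)) :
    ∃ u n : ℤ, 2 * x = u ∧ x^2 - D * y^2 = n := by
  have hc : IsIntegral ℤ ((x : ℂ) - y * sqrtC D) := by
    have := h.map ((starRingEnd ℂ).toIntAlgHom)
    simpa [conj_sqrtC D hD, sub_eq_add_neg] using this
  obtain ⟨u, hu⟩ := rat_int (2 * x) (by
    have := h.add hc
    have e : ((2 * x : ℚ) : ℂ) = (x + y * sqrtC D) + (x - y * sqrtC D) := by push_cast; ring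
    rwa [e])
  obtain ⟨n, hn⟩ := rat_int (x^2 - D * y^2) (by
    have := h.mul hc
    have e : ((x^2 - D * y^2 : ℚ) : ℂ) = (x + y * sqrtC D) * (x - y * sqrtC D) := by
      push_cast
      linear_combination (y : ℂ)^2 * sqrtC_sq D
    rwa [e])
  exact ⟨u, n, hu, hn⟩

lemma nosq (D v : ℤ) (hD : D % 4 = 3) (y : ℚ) (h : D * y^2 = v) : v % 4 = 0 ∨ v % 4 = 3 := by
  have h1 : IsSquare ((D * v : ℤ) : ℚ) := ⟨D * y, by push_cast; rw [← h]; ring⟩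
  rw [Rat.isSquare_intCast_iff] at h1
  obtain ⟨w, hw⟩ := h1
  have h2 : (D * v) % 4 = (w * w) % 4 := by rw [hw]
  rw [Int.mul_emod, hD, Int.mul_emod w w] at h2
  have a1 : w % 4 = 0 ∨ w % 4 = 1 ∨ w % 4 = 2 ∨ w % 4 = 3 := by omega
  rcases a1 with a | a | a | a <;> rw [a] at h2 <;> omega

lemma unit_pow (D : ℤ) (hD : D < 0) (hD4 : D % 4 = 3) (η ξ : ℂ) (hη : η ∈ Qsqrt D)
    (hξ : ξ ∈ Qsqrt D) (h1 : IsIntegral ℤ η) (h2 : IsIntegral ℤ ξ) (h : η * ξ = 1) :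
    η ^ 4 = 1 := by
  obtain ⟨x, y, rfl⟩ := mem_form D η hη
  obtain ⟨x', y', rfl⟩ := mem_form D ξ hξ
  obtain ⟨u, n, hu, hn⟩ := integral_coords D hD x y h1
  obtain ⟨u', n', hu', hn'⟩ := integral_coords D hD x' y' h2
  have hDq : (D : ℚ) < 0 := by exact_mod_cast hD
  have hnn : n * n' = 1 := by
    have hc := congrArg (starRingEnd ℂ) h
    simp [conj_sqrtC D hD] at hc
    have : ((x^2 - D * y^2 : ℚ) : ℂ) * ((x'^2 - D * y'^2 : ℚ) : ℂ) = 1 := by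
      have e := sqrtC_sq D
      have e1 : ((x^2 - D * y^2 : ℚ) : ℂ) = (x + y * sqrtC D) * (x + -(y * sqrtC D)) := by
        push_cast; linear_combination (y : ℂ)^2 * e
      have e2 : ((x'^2 - D * y'^2 : ℚ) : ℂ) = (x' + y' * sqrtC D) * (x' + -(y' * sqrtC D)) := by
        push_cast; linear_combination (y' : ℂ)^2 * e
      rw [e1, e2, mul_mul_mul_comm, h, hc, one_mul]
    rw [hn, hn'] at this
    exact_mod_cast this
  have hn0 : 0 ≤ n := by
    have : (0 : ℚ) ≤ n := by rw [← hn]; nlinarith [sq_nonneg x, sq_nonneg y]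
    exact_mod_cast this
  have hn1 : n = 1 := by
    rcases Int.eq_one_or_neg_one_of_mul_eq_one hnn with h | h <;> omega
  rw [hn1] at hn
  have hv : D * (2 * y)^2 = ((u^2 - 4 : ℤ) : ℚ) := by
    push_cast; rw [← hu]; push_cast at hn; linear_combination -4 * hn
  have hu4 : u^2 ≤ 4 := by
    have : ((u^2 - 4 : ℤ) : ℚ) ≤ 0 := by rw [← hv]; nlinarith [sq_nonneg (2 * y)]
    have : u^2 - 4 ≤ 0 := by exact_mod_cast this
    linarith
  have hub : -2 ≤ u ∧ u ≤ 2 := ⟨by nlinarith, by nlinarith⟩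
  have hns := nosq D _ hD4 _ hv
  have e := sqrtC_sq D
  have hyz : u^2 = 4 → y = 0 := by
    intro h4
    rw [h4] at hv
    simpa [hD.ne] using hv
  obtain ⟨l1, l2⟩ := hub
  interval_cases u
  · have hx : x = -1 := by push_cast at hu; linarith
    rw [hx, hyz (by norm_num)]; norm_num
  · norm_num at hns
  · have hx : x = 0 := by push_cast at hu; linarith
    rw [hx] at hn ⊢
    have hn' : -((D : ℂ) * y^2) = 1 := by
      have : -((D : ℚ) * y^2) = 1 := by push_cast at hn; linarith
      exact_mod_cast this
    have : ((y : ℂ) * sqrtC D)^2 = -1 := by rw [mul_pow, e]; linear_combination -hn'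
    rw [Rat.cast_zero, zero_add, show (4 : ℕ) = 2 * 2 from rfl, pow_mul, this]; norm_num
  · norm_num at hns
  · have hx : x = 1 := by push_cast at hu; linarith
    rw [hx, hyz (by norm_num)]; norm_num

lemma unit_is_pow (η : ℂ) (h : η ^ 4 = 1) (p r : ℕ) (hpr : p = 2 * r + 1) : (η ^ p) ^ p = η := by
  rw [← pow_mul, hpr, show (2*r+1)*(2*r+1) = 4 * (r*r+r) + 1 by ring, pow_succ, pow_mul, h]
  simp

lemma lift_re (D' a : ℤ) (s : ℂ) (hs : s.re = 0) (hs2 : s * s = D') (p : ℕ) :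
    (((a : ℂ) + s) ^ p).re = ((⟨a, 1⟩ : Zsqrtd D') ^ p).re := by
  have h1 : (Zsqrtd.lift ⟨s, hs2⟩ (⟨a, 1⟩ : Zsqrtd D')) = a + s := by simp
  rw [← h1, ← map_pow, Zsqrtd.lift_apply_apply]
  simp [hs]

/-- The final contradiction. -/
lemma final_contra (m : ℤ) (hm : 3 ≤ m) (hmodd : Odd m) (p k r : ℕ) (hp : p.Prime)
    (hpr : p = 2 * r + 1) (hk : k ≠ 0) (D : ℤ) (hDdef : D = 1 - 2 * m ^ (p * k)) (hD : D < 0)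
    (hD4 : D % 4 = 3) (g : ℂ) (hg : g ∈ Qsqrt D)
    (hgi : IsIntegral ℤ g) (hgp : g ^ p = 1 - m ^ (p * k) + sqrtC D) : False := by
  have e := sqrtC_sq D
  have eD : (D : ℂ) = 1 - 2 * m ^ (p * k) := by rw [hDdef]; push_cast; rfl
  have hsm : sqrtC D ∈ Qsqrt D := IntermediateField.mem_adjoin_simple_self ℚ _
  have ha2 : (1 + sqrtC D)^2 = 2 * g ^ p := by
    rw [hgp]; linear_combination e + eD
  have hre : (1 + sqrtC D).re = 1 := by simp [re_sqrtC D hD]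
  have ha0 : (1 + sqrtC D) ≠ 0 := by
    intro h; rw [h] at hre; simp at hre
  have hg0 : g ≠ 0 := by
    rintro rfl
    rw [zero_pow hp.ne_zero, mul_zero] at ha2
    exact ha0 (pow_eq_zero_iff two_ne_zero |>.mp ha2)
  obtain ⟨z, hz⟩ : ∃ z : ℂ, z = 2 ^ r * (1 + sqrtC D) / (2 * g) ^ r := ⟨_, rfl⟩
  have h2g : (2 * g) ^ r ≠ 0 := pow_ne_zero _ (mul_ne_zero two_ne_zero hg0)
  have hz2 : z ^ 2 = 2 * g := by
    rw [hz, div_pow, div_eq_iff (pow_ne_zero _ h2g), mul_pow, ha2, hpr]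
    ring
  have hzp : z ^ p = 2 ^ r * (1 + sqrtC D) := by
    rw [hpr, pow_succ, pow_mul, hz2, hz, mul_div_cancel₀ _ h2g]
  have hzK : z ∈ Qsqrt D := by
    rw [hz]
    have h2 : (2 : ℂ) ∈ Qsqrt D := ofNat_mem _ 2
    exact div_mem (mul_mem (pow_mem h2 _) (add_mem (one_mem _) hsm)) (pow_mem (mul_mem h2 hg) _)
  have hzi : IsIntegral ℤ z := by
    refine IsIntegral.of_pow (n := 2) (by norm_num) ?_
    rw [hz2]
    have h2 := (isIntegral_algebraMap (R := ℤ) (A := ℂ) (x := 2)).mul hgi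
    simpa using h2
  obtain ⟨x, y, hxy⟩ := mem_form D z hzK
  rw [hxy] at hzi
  obtain ⟨u, n, hu, hn⟩ := integral_coords D hD x y hzi
  have hDq : (D : ℚ) < 0 := by exact_mod_cast hD
  -- norm
  have hzc : z * (starRingEnd ℂ) z = (n : ℂ) := by
    have hn' : (x : ℂ)^2 - D * y^2 = n := by exact_mod_cast hn
    rw [hxy]
    simp [conj_sqrtC D hD]
    linear_combination hn' - (y : ℂ)^2 * e
  have hn0 : 0 ≤ n := by
    have : (0 : ℚ) ≤ n := by rw [← hn]; nlinarith [sq_nonneg x, sq_nonneg y]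
    exact_mod_cast this
  have hnp : n ^ p = (2 * m ^ k) ^ p := by
    have h1 : (n : ℂ) ^ p = (2 * m ^ k) ^ p := by
      rw [← hzc, mul_pow, ← map_pow, hzp]
      have hc2 : (starRingEnd ℂ) 2 = 2 := by
        simpa using map_ofNat (starRingEnd ℂ) 2
      rw [map_mul, map_pow, hc2, map_add, map_one, conj_sqrtC D hD]
      have : ((2 : ℂ) * m ^ k) ^ p = 2 ^ r * 2 ^ r * (2 * m ^ (p * k)) := by
        rw [mul_pow, ← pow_mul, mul_comm k p]
        have h22 : (2 : ℂ) ^ p = 2 ^ r * 2 ^ r * 2 := by rw [hpr]; ring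
        rw [h22]; ring
      rw [this]
      linear_combination (2 : ℂ)^r * 2^r * (-e - eD)
    exact_mod_cast h1
  have hmk : 3 ≤ m ^ k := hm.trans (le_self_pow₀ (by linarith) hk)
  have hnk : n = 2 * m ^ k :=
    (pow_left_inj₀ hn0 (by linarith) hp.ne_zero).mp hnp
  have hMo : Odd (m ^ k) := hmodd.pow
  generalize m ^ k = M at *
  obtain ⟨c, hc⟩ := hMo
  have hv : D * (2 * y)^2 = ((u^2 - 4 * n : ℤ) : ℚ) := by
    push_cast; rw [← hu]; linear_combination -4 * hn
  have hns := nosq D _ hD4 _ hv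
  rcases Int.even_or_odd' u with ⟨a, ha | ha⟩
  swap
  · have : u^2 - 4 * n = 4 * (a * a + a - n) + 1 := by rw [ha]; ring
    omega
  have hxa : x = a := by
    rw [ha] at hu; push_cast at hu; linarith
  have hv2 : D * y^2 = ((a^2 - 2 * M : ℤ) : ℚ) := by
    rw [hxa, hnk] at hn; push_cast at hn ⊢; linear_combination -hn
  have hns2 := nosq D _ hD4 _ hv2
  have hao : Odd a := by
    rcases Int.even_or_odd' a with ⟨b, hb | hb⟩
    · have : a^2 - 2 * M = 4 * (b * b - c - 1) + 2 := by rw [hb, hc]; ring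
      omega
    · exact ⟨b, hb⟩
  have hs : ((y : ℂ) * sqrtC D).re = 0 := by
    simp [re_sqrtC D hD]
  have hs2 : ((y : ℂ) * sqrtC D) * (y * sqrtC D) = ((a^2 - 2 * M : ℤ) : ℂ) := by
    have : (D : ℂ) * y^2 = ((a^2 - 2 * M : ℤ) : ℂ) := by exact_mod_cast hv2
    rw [← this]; linear_combination (y : ℂ)^2 * e
  have hrez : (z ^ p).re = (2 ^ r : ℤ) := by
    rw [hzp]
    have : ((2 : ℂ) ^ r) = (((2 ^ r : ℤ) : ℝ) : ℂ) := by push_cast; rfl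
    rw [this, Complex.re_ofReal_mul, hre, mul_one]
  have hza : z = (a : ℂ) + y * sqrtC D := by rw [hxy, hxa]; simp
  have hdvd : a ∣ 2 ^ r := by
    have h1 := lift_re _ a _ hs hs2 p
    rw [← hza, hrez] at h1
    have h2 : (2 ^ r : ℤ) = ((⟨a, 1⟩ : Zsqrtd (a^2 - 2 * M)) ^ p).re := by exact_mod_cast h1
    rw [h2, hpr]
    exact dvd_re _ a r
  have hau : a = 1 ∨ a = -1 := by
    have hcop : IsCoprime a (2 ^ r) := by
      apply IsCoprime.pow_right
      obtain ⟨b, hb⟩ := hao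
      exact ⟨1, -b, by rw [hb]; ring⟩
    exact Int.isUnit_iff.mp (hcop.isUnit_of_dvd' dvd_rfl hdvd)
  have hMo : Odd M := ⟨c, hc⟩
  rcases hau with rfl | rfl
  · have h1 := lift_re _ 1 _ hs hs2 p
    rw [← hza, hrez] at h1
    rw [show ((1 : ℤ)^2 - 2 * M) = 1 - 2 * M by ring] at h1
    exact key2 M hMo (by linarith) p r hp hpr 1 (Or.inl rfl) (by rw [mul_one]; exact_mod_cast h1.symm)
  · have hs' : (-((y : ℂ) * sqrtC D)).re = 0 := by rw [Complex.neg_re, hs, neg_zero]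
    have hs2' : (-((y : ℂ) * sqrtC D)) * (-(y * sqrtC D)) = ((1 - 2 * M : ℤ) : ℂ) := by
      rw [neg_mul_neg, hs2]; push_cast; ring
    have h1 := lift_re _ 1 _ hs' hs2' p
    have h2 : ((1 : ℤ) : ℂ) + -((y : ℂ) * sqrtC D) = -z := by rw [hza]; push_cast; ring
    have hpo : Odd p := ⟨r, hpr⟩
    rw [h2, hpo.neg_pow, Complex.neg_re, hrez] at h1
    refine key2 M hMo (by linarith) p r hp hpr (-1) (Or.inr rfl) ?_
    have : (-(2 ^ r) : ℤ) = ((⟨1, 1⟩ : Zsqrtd (1 - 2 * M)) ^ p).re := by exact_mod_cast h1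
    rw [← this]; ring

/-- The main divisibility. -/
lemma prime_dvd_classNumber (m : ℤ) (hm : 3 ≤ m) (hmodd : Odd m) (p k : ℕ) (hp : p.Prime)
    (hp2 : Odd p) (hk : k ≠ 0) :
    p ∣ NumberField.classNumber (Qsqrt (1 - 2 * m ^ (p * k))) := by
  obtain ⟨r, hpr⟩ := hp2
  by_contra hnd
  obtain ⟨D, hDdef⟩ : ∃ D : ℤ, D = 1 - 2 * m ^ (p * k) := ⟨_, rfl⟩
  rw [← hDdef] at hnd
  have hmt : 3 ≤ m ^ (p * k) := hm.trans (le_self_pow₀ (by linarith) (mul_ne_zero hp.ne_zero hk))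
  have hMo : Odd (m ^ (p * k)) := hmodd.pow
  have hD : D < 0 := by linarith
  have hD4 : D % 4 = 3 := by
    obtain ⟨c, hc⟩ := hMo
    omega
  have hsm : sqrtC D ∈ Qsqrt D := IntermediateField.mem_adjoin_simple_self ℚ _
  let sK : Qsqrt D := ⟨sqrtC D, hsm⟩
  have hsK : sK ^ 2 = (D : Qsqrt D) := by
    apply Subtype.ext
    push_cast
    exact sqrtC_sq D
  have hsi : IsIntegral ℤ sK := by
    refine IsIntegral.of_pow (n := 2) (by norm_num) ?_
    rw [hsK]
    simpa using (isIntegral_algebraMap (R := ℤ) (A := Qsqrt D) (x := D))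
  let s : 𝓞 (Qsqrt D) := ⟨sK, hsi⟩
  have hs2 : s ^ 2 = (D : 𝓞 (Qsqrt D)) := by
    apply RingOfIntegers.ext
    push_cast
    exact hsK
  have hs2' : s ^ 2 = 1 - 2 * (m : 𝓞 (Qsqrt D)) ^ (p * k) := by
    rw [hs2, hDdef]; push_cast; rfl
  let β : 𝓞 (Qsqrt D) := 1 - (m : 𝓞 (Qsqrt D)) ^ (p * k) + s
  let β' : 𝓞 (Qsqrt D) := 1 - (m : 𝓞 (Qsqrt D)) ^ (p * k) - s
  have hmul : β * β' = ((m : 𝓞 (Qsqrt D)) ^ (2 * k)) ^ p := by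
    rw [← pow_mul, show 2 * k * p = (p * k) * 2 by ring, pow_mul]
    simp only [β, β']
    linear_combination -hs2'
  have hcop : IsCoprime β β' := by
    have hc : IsCoprime (2 * (1 - m ^ (p * k))) (m ^ (p * k) * m ^ (p * k)) := by
      obtain ⟨c, hc⟩ := hMo
      have h1 : IsCoprime (2 * (1 - m ^ (p * k))) (m ^ (p * k)) := by
        apply IsCoprime.mul_left
        · exact ⟨-c, 1, by rw [hc]; ring⟩
        · exact ⟨1, 1, by ring⟩
      exact h1.mul_right h1
    obtain ⟨x, y, hxy⟩ := hc
    have hxy' := congrArg (Int.cast : ℤ → 𝓞 (Qsqrt D)) hxy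
    push_cast at hxy'
    refine ⟨x + y * β', x, ?_⟩
    simp only [β, β']
    linear_combination hxy' - y * hs2'
  have hideal : Ideal.span {β} * Ideal.span {β'} =
      (Ideal.span {(m : 𝓞 (Qsqrt D)) ^ (2 * k)}) ^ p := by
    rw [Ideal.span_singleton_mul_span_singleton, hmul, Ideal.span_singleton_pow]
  have hcopI : IsCoprime (Ideal.span {β}) (Ideal.span {β'}) :=
    (Ideal.isCoprime_span_singleton_iff _ _).mpr hcop
  obtain ⟨I, hI⟩ := exists_eq_pow_of_mul_eq_pow_of_coprime hcopI hideal
  let φ : 𝓞 (Qsqrt D) →+* ℂ :=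
    ((Qsqrt D).val.toRingHom).comp (algebraMap (𝓞 (Qsqrt D)) (Qsqrt D))
  have hφs : φ s = sqrtC D := rfl
  have hφβ : φ β = 1 - m ^ (p * k) + sqrtC D := by
    simp only [β, map_add, map_sub, map_pow, map_intCast, map_one, hφs]
  have hβ0 : β ≠ 0 := by
    intro h0
    have h2 : (1 : ℂ) - m ^ (p * k) + sqrtC D = 0 := by
      rw [← hφβ, h0, map_zero]
    have h3 := congrArg Complex.re h2
    have h4 : ((m : ℂ) ^ (p * k)).re = ((m ^ (p * k) : ℤ) : ℝ) := by
      have : (m : ℂ) ^ (p * k) = (((m ^ (p * k) : ℤ) : ℝ) : ℂ) := by push_cast; rfl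
      rw [this, Complex.ofReal_re]
    rw [Complex.add_re, Complex.sub_re, h4, re_sqrtC D hD] at h3
    simp only [Complex.one_re, add_zero, Complex.zero_re] at h3
    have h5 : (1 : ℝ) = ((m ^ (p * k) : ℤ) : ℝ) := by linarith
    have h6 : (1 : ℤ) = m ^ (p * k) := by exact_mod_cast h5
    omega
  have hI0 : I ≠ 0 := by
    rintro rfl
    rw [zero_pow hp.ne_zero] at hI
    exact hβ0 (Ideal.span_singleton_eq_bot.mp hI)
  have hprin : I.IsPrincipal := by
    have hImem := mem_nonZeroDivisors_of_ne_zero hI0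
    rw [← ClassGroup.mk0_eq_one_iff hImem]
    have hpow : (ClassGroup.mk0 ⟨I, hImem⟩) ^ p = 1 := by
      rw [← map_pow]
      have : (⟨I, hImem⟩ : nonZeroDivisors (Ideal (𝓞 (Qsqrt D)))) ^ p =
          ⟨I ^ p, pow_mem hImem p⟩ := rfl
      rw [this, ClassGroup.mk0_eq_one_iff, ← hI]
      exact ⟨β, rfl⟩
    have hcard : (ClassGroup.mk0 ⟨I, hImem⟩) ^ (NumberField.classNumber (Qsqrt D)) = 1 := by
      rw [NumberField.classNumber]; exact pow_card_eq_one
    have hcp : Nat.Coprime p (NumberField.classNumber (Qsqrt D)) :=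
      (Nat.Prime.coprime_iff_not_dvd hp).mpr hnd
    have := pow_gcd_eq_one.mpr ⟨hpow, hcard⟩
    rwa [hcp.gcd_eq_one, pow_one] at this
  obtain ⟨γ, hγ⟩ := hprin
  rw [hγ, Ideal.submodule_span_eq, Ideal.span_singleton_pow,
    Ideal.span_singleton_eq_span_singleton] at hI
  obtain ⟨v, hv⟩ := hI.symm
  let η : ℂ := (((v : 𝓞 (Qsqrt D)) : Qsqrt D) : ℂ)
  let ξ : ℂ := (((v⁻¹ : (𝓞 (Qsqrt D))ˣ) : 𝓞 (Qsqrt D)) : Qsqrt D)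
  have hint : ∀ w : 𝓞 (Qsqrt D), IsIntegral ℤ ((w : Qsqrt D) : ℂ) := fun w =>
    (RingOfIntegers.isIntegral_coe w).map ((Qsqrt D).val.toRingHom.toIntAlgHom)
  have hηξ : η * ξ = 1 := by
    have h1 : (v : 𝓞 (Qsqrt D)) * ((v⁻¹ : (𝓞 (Qsqrt D))ˣ) : 𝓞 (Qsqrt D)) = 1 := v.mul_inv
    have h2 := congrArg φ h1
    rwa [map_mul, map_one] at h2
  have hη4 := unit_pow D hD hD4 η ξ (SetLike.coe_mem _) (SetLike.coe_mem _) (hint _) (hint _) hηξ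
  have hηp := unit_is_pow η hη4 p r hpr
  let c : ℂ := ((γ : Qsqrt D) : ℂ)
  have hvC : c ^ p * η = 1 - m ^ (p * k) + sqrtC D := by
    have h2 := congrArg φ hv
    rwa [map_mul, map_pow, hφβ] at h2
  refine final_contra m hm hmodd p k r hp hpr hk D hDdef hD hD4 (c * η ^ p)
    (mul_mem (SetLike.coe_mem _) (pow_mem (SetLike.coe_mem _) _))
    ((hint _).mul ((hint _).pow _)) ?_
  rw [mul_pow, hηp, hvC]

/-- For an odd integer `m ≥ 3` there is a finite set of primes `p₁, …, pₙ` such that for every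
odd integer `t ≥ 3` coprime to `p₁ ⋯ pₙ`, every prime `p ∣ t` divides the class number of
`ℚ(√(1 - 2 m ^ t))`; in particular if moreover `t` is square-free then `t` divides this
class number. -/
theorem exceptional_primes_finite_and_t_dvd_classNumber
    (m : ℤ) (hm : 3 ≤ m) (hmodd : Odd m) :
    ∃ S : Finset ℕ, (∀ p ∈ S, p.Prime) ∧
      ∀ t : ℕ, 3 ≤ t → Odd t → Nat.Coprime t (∏ p ∈ S, p) →
        (∀ p : ℕ, p.Prime → p ∣ t →
          p ∣ NumberField.classNumber (Qsqrt (1 - 2 * m ^ t))) ∧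
        (Squarefree t → t ∣ NumberField.classNumber (Qsqrt (1 - 2 * m ^ t))) := by
  refine ⟨∅, by simp, fun t ht hto _ => ?_⟩
  have hmain : ∀ p : ℕ, p.Prime → p ∣ t →
      p ∣ NumberField.classNumber (Qsqrt (1 - 2 * m ^ t)) := by
    rintro p hp ⟨k, rfl⟩
    have hk : k ≠ 0 := by rintro rfl; simp at ht
    exact prime_dvd_classNumber m hm hmodd p k hp (Nat.odd_mul.mp hto).1 hk
  refine ⟨hmain, fun hsq => ?_⟩
  have h := Finset.prod_primes_dvd (s := t.primeFactors)
    (NumberField.classNumber (Qsqrt (1 - 2 * m ^ t)))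
    (fun q hq => (Nat.prime_of_mem_primeFactors hq).prime)
    (fun q hq => hmain q (Nat.prime_of_mem_primeFactors hq) (Nat.dvd_of_mem_primeFactors hq))
  rwa [Nat.prod_primeFactors_of_squarefree hsq] at h
end

section
/- Let m ≥ 3 be an odd integer and let p, p+2 be a pair of twin primes (both p and p+2 prime). Then p divides the class number of ℚ(√(1 − 2m^p)) or p+2 divides the class number of ℚ(√(1 − 2m^{p+2})). -/
open Polynomial NumberField

open ComplexConjugate in
lemma conj_sqrtC_s8 (d : ℤ) (hd : d < 0) : conj (sqrtC d) = - sqrtC d := by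
  have h := sqrtC_sq d
  have hre := congrArg Complex.re h
  have him := congrArg Complex.im h
  simp [pow_two] at hre him
  have hd' : (d : ℝ) < 0 := by exact_mod_cast hd
  have h0 : (sqrtC d).re = 0 := by
    have : (sqrtC d).re * (sqrtC d).im = 0 := by linarith
    rcases mul_eq_zero.1 this with h1 | h1
    · exact h1
    · rw [h1] at hre
      nlinarith [sq_nonneg (sqrtC d).re]
  apply Complex.ext <;> simp [h0]

lemma mem_Qsqrt (d : ℤ) (z : ℂ) (hz : z ∈ Qsqrt d) :
    ∃ a b : ℚ, z = a + b * sqrtC d := by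
  unfold Qsqrt at hz
  rw [← IntermediateField.mem_toSubalgebra,
    IntermediateField.adjoin_simple_toSubalgebra_of_isAlgebraic (isIntegral_sqrtC d).isAlgebraic] at hz
  induction hz using Algebra.adjoin_induction with
  | mem x hx =>
    refine ⟨0, 1, ?_⟩
    simp at hx
    simp [hx]
  | algebraMap r => exact ⟨r, 0, by simp⟩
  | add x y _ _ hx hy =>
    obtain ⟨a, b, rfl⟩ := hx
    obtain ⟨a', b', rfl⟩ := hy
    exact ⟨a + a', b + b', by push_cast; ring⟩
  | mul x y _ _ hx hy =>
    obtain ⟨a, b, rfl⟩ := hx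
    obtain ⟨a', b', rfl⟩ := hy
    refine ⟨a * a' + b * b' * d, a * b' + b * a', ?_⟩
    push_cast
    linear_combination (b : ℂ) * b' * sqrtC_sq d

lemma int_of_rat_integral (q : ℚ) (h : IsIntegral ℤ (q : ℂ)) : ∃ T : ℤ, (q : ℂ) = T := by
  have h1 : IsIntegral ℤ (algebraMap ℚ ℂ q) := by simpa using h
  rw [isIntegral_algebraMap_iff (algebraMap ℚ ℂ).injective] at h1
  obtain ⟨T, hT⟩ := IsIntegrallyClosed.isIntegral_iff.1 h1
  refine ⟨T, ?_⟩
  rw [← hT]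
  simp

open ComplexConjugate in
lemma isIntegral_conj {z : ℂ} (h : IsIntegral ℤ z) : IsIntegral ℤ (conj z) :=
  h.map (Complex.conjAe.restrictScalars ℤ).toAlgHom

open ComplexConjugate in
lemma exists_trace (d : ℤ) (hd : d < 0) (z : ℂ) (hz : z ∈ Qsqrt d) (h : IsIntegral ℤ z) :
    ∃ T : ℤ, z + conj z = T := by
  have hi := h.add (isIntegral_conj h)
  obtain ⟨a, b, rfl⟩ := mem_Qsqrt d z hz
  have e : ((a : ℂ) + b * sqrtC d) + conj ((a : ℂ) + b * sqrtC d) = ((2 * a : ℚ) : ℂ) := by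
    simp [conj_sqrtC_s8 d hd]; ring
  rw [e] at hi ⊢
  exact int_of_rat_integral _ hi

open ComplexConjugate in
lemma exists_norm (d : ℤ) (hd : d < 0) (z : ℂ) (hz : z ∈ Qsqrt d) (h : IsIntegral ℤ z) :
    ∃ T : ℤ, 0 ≤ T ∧ z * conj z = T := by
  have hi := h.mul (isIntegral_conj h)
  have : ∃ T : ℤ, z * conj z = T := by
    obtain ⟨a, b, rfl⟩ := mem_Qsqrt d z hz
    have e : ((a : ℂ) + b * sqrtC d) * conj ((a : ℂ) + b * sqrtC d)
        = ((a ^ 2 - d * b ^ 2 : ℚ) : ℂ) := by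
      simp [conj_sqrtC_s8 d hd]; linear_combination (-(b : ℂ) ^ 2) * sqrtC_sq d
    rw [e] at hi ⊢
    exact int_of_rat_integral _ hi
  obtain ⟨T, hT⟩ := this
  refine ⟨T, ?_, hT⟩
  rw [Complex.mul_conj] at hT
  have : Complex.normSq z = (T : ℝ) := by exact_mod_cast hT
  have h2 := Complex.normSq_nonneg z
  rw [this] at h2
  exact_mod_cast h2

/-- No square root of `-3` in the field when `d ≡ 3 mod 4`. -/
lemma no_sqrt_neg_three (d : ℤ) (hd : d < 0) (hd4 : d % 4 = 3) (z : ℂ) (hz : z ∈ Qsqrt d) :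
    z ^ 2 ≠ -3 := by
  intro h
  obtain ⟨a, b, rfl⟩ := mem_Qsqrt d z hz
  have hc := conj_sqrtC_s8 d hd
  have h2 := congrArg (starRingEnd ℂ) h
  simp [hc] at h2
  rw [map_ofNat] at h2
  have hs0 : sqrtC d ≠ 0 := by
    intro h0
    have := sqrtC_sq d
    rw [h0] at this
    have h3 : (d : ℂ) = 0 := by rw [← this]; simp
    have h4 : d = 0 := by exact_mod_cast h3
    omega
  have hab : (a : ℂ) * b * sqrtC d = 0 := by linear_combination (h - h2) / 4
  have hsum : (a : ℂ) ^ 2 + d * b ^ 2 = -3 := by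
    linear_combination (h + h2) / 2 - (b : ℂ) ^ 2 * sqrtC_sq d
  have hsum' : a ^ 2 + d * b ^ 2 = -3 := by exact_mod_cast hsum
  have hab' : a * b = 0 := by
    rcases mul_eq_zero.1 hab with h5 | h5
    · exact_mod_cast h5
    · exact absurd h5 hs0
  rcases mul_eq_zero.1 hab' with h5 | h5
  · have hsq : IsSquare (((-3 * d : ℤ)) : ℚ) := by
      refine ⟨d * b, ?_⟩
      rw [h5] at hsum'
      push_cast
      linear_combination -(d : ℚ) * hsum'
    rw [Rat.isSquare_intCast_iff] at hsq
    obtain ⟨r, hr⟩ := hsq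
    have h6 : (r * r) % 4 = 3 := by rw [← hr]; omega
    have h7 : r % 4 = 0 ∨ r % 4 = 1 ∨ r % 4 = 2 ∨ r % 4 = 3 := by omega
    rcases h7 with h7 | h7 | h7 | h7 <;> simp [Int.mul_emod, h7] at h6
  · rw [h5] at hsum'
    nlinarith [sq_nonneg a]

open ComplexConjugate in
/-- Units satisfy `u ^ 4 = 1`. -/
lemma unit_pow_four (d : ℤ) (hd : d < 0) (hd4 : d % 4 = 3) (u v : ℂ) (hu : u ∈ Qsqrt d)
    (hv : v ∈ Qsqrt d) (hui : IsIntegral ℤ u) (hvi : IsIntegral ℤ v) (huv : u * v = 1) :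
    u ^ 4 = 1 := by
  obtain ⟨N, hN0, hN⟩ := exists_norm d hd u hu hui
  obtain ⟨M, hM0, hM⟩ := exists_norm d hd v hv hvi
  obtain ⟨t, ht⟩ := exists_trace d hd u hu hui
  have hNM : N * M = 1 := by
    have : (N : ℂ) * M = 1 := by
      rw [← hN, ← hM]
      have h3 := congrArg conj huv
      simp at h3
      linear_combination (conj u * conj v) * huv + h3
    exact_mod_cast this
  have hN1 : N = 1 := Int.eq_one_of_mul_eq_one_right hN0 hNM
  subst hN1
  have hq : u ^ 2 - t * u + 1 = 0 := by
    rw [← ht]; push_cast at hN; linear_combination -hN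
  -- bound on the trace
  have hre : 2 * u.re = t := by
    have := congrArg Complex.re ht
    simp at this; linarith
  have hns : u.re ^ 2 + u.im ^ 2 = 1 := by
    have := congrArg Complex.re hN
    simp at this; nlinarith
  have htt : t ^ 2 ≤ 4 := by
    have : (t : ℝ) ^ 2 ≤ 4 := by rw [← hre]; nlinarith [sq_nonneg u.im]
    exact_mod_cast this
  have h1 : -2 ≤ t := by nlinarith
  have h2 : t ≤ 2 := by nlinarith
  have hsq1 : t ^ 2 ≠ 1 := by
    intro h
    apply no_sqrt_neg_three d hd hd4 (2 * u - t)
    · have : (2 : ℂ) ∈ Qsqrt d := by simpa using (Qsqrt d).natCast_mem 2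
      exact sub_mem (mul_mem this hu) (by simpa using (Qsqrt d).intCast_mem t)
    · have h' : (t : ℂ) ^ 2 = 1 := by exact_mod_cast h
      linear_combination 4 * hq + h'
  have : t = -2 ∨ t = 0 ∨ t = 2 := by
    interval_cases t <;> simp_all
  rcases this with rfl | rfl | rfl
  · have : (u + 1) ^ 2 = 0 := by push_cast at hq; linear_combination hq
    have : u = -1 := by
      have := pow_eq_zero_iff (two_ne_zero) |>.1 this
      linear_combination this
    rw [this]; norm_num
  · push_cast at hq; linear_combination (u ^ 2 - 1) * hq
  · have : (u - 1) ^ 2 = 0 := by push_cast at hq; linear_combination hq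
    have : u = 1 := by
      have := pow_eq_zero_iff (two_ne_zero) |>.1 this
      linear_combination this
    rw [this]; norm_num

/-- If `p` does not divide the class number, an element coprime to a cofactor in a `p`-th power
is a unit times a `p`-th power. -/
lemma exists_unit_mul_pow (K : Type*) [Field K] [NumberField K] (p : ℕ) (hp : p.Prime)
    (hcl : ¬ p ∣ NumberField.classNumber K) (b b' c : 𝓞 K) (hb : b ≠ 0)
    (hcop : IsCoprime b b') (h : b * b' = c ^ p) :
    ∃ (u : (𝓞 K)ˣ) (g : 𝓞 K), b = u * g ^ p := by
  have h1 : Ideal.span {b} * Ideal.span {b'} = (Ideal.span {c}) ^ p := by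
    rw [Ideal.span_singleton_mul_span_singleton, Ideal.span_singleton_pow, h]
  have h2 : IsCoprime (Ideal.span {b}) (Ideal.span {b'}) :=
    (Ideal.isCoprime_span_singleton_iff b b').2 hcop
  obtain ⟨B, hB⟩ := exists_eq_pow_of_mul_eq_pow_of_coprime h2 h1
  have hB0 : B ≠ 0 := by
    rintro rfl
    rw [zero_pow hp.ne_zero] at hB
    simp at hB
    exact hb hB
  have hBm : B ∈ nonZeroDivisors (Ideal (𝓞 K)) := mem_nonZeroDivisors_of_ne_zero hB0
  have hpow : ClassGroup.mk0 ⟨B, hBm⟩ ^ p = 1 := by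
    rw [← map_pow, ClassGroup.mk0_eq_one_iff]
    simp only [SubmonoidClass.mk_pow]
    rw [← hB]
    exact ⟨b, rfl⟩
  have h3 : ClassGroup.mk0 ⟨B, hBm⟩ = 1 := by
    have d1 := orderOf_dvd_of_pow_eq_one hpow
    have d2 : orderOf (ClassGroup.mk0 ⟨B, hBm⟩) ∣ NumberField.classNumber K := orderOf_dvd_card
    rcases (Nat.dvd_prime hp).1 d1 with e | e
    · exact orderOf_eq_one_iff.1 e
    · rw [e] at d2; exact absurd d2 hcl
  rw [ClassGroup.mk0_eq_one_iff] at h3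
  obtain ⟨g, hg⟩ := h3
  have hg' : B = Ideal.span {g} := hg
  rw [hg', Ideal.span_singleton_pow, Ideal.span_singleton_eq_span_singleton] at hB
  obtain ⟨u, hu⟩ := hB.symm
  exact ⟨u, g, by rw [← hu, mul_comm]⟩

def lucasW (P m : ℤ) : ℕ → ℤ
  | 0 => 1
  | 1 => P - m
  | (n + 2) => P * lucasW P m (n + 1) - m ^ 2 * lucasW P m n

lemma lucasW_odd (P m : ℤ) (hP : Even P) (hm : Odd m) :
    ∀ n, Odd (lucasW P m n) ∧ Odd (lucasW P m (n + 1))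
  | 0 => ⟨by simp [lucasW], by simpa [lucasW] using hP.sub_odd hm⟩
  | (n + 1) => by
    obtain ⟨h1, h2⟩ := lucasW_odd P m hP hm n
    refine ⟨h2, ?_⟩
    simp only [lucasW]
    exact (hP.mul_right _).sub_odd (hm.pow.mul h1)

lemma lucasW_inv (m : ℤ) (n : ℕ) :
    lucasW (2 - 2 * m) m (n + 1) ^ 2
      - (2 - 2 * m) * lucasW (2 - 2 * m) m (n + 1) * lucasW (2 - 2 * m) m n
      + m ^ 2 * lucasW (2 - 2 * m) m n ^ 2 = 2 * m * (2 * m - 1) * (m ^ 2) ^ n := by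
  induction n with
  | zero => simp [lucasW]; ring
  | succ n ih =>
    rw [pow_succ (m ^ 2) n, ← mul_assoc, ← ih]
    simp only [lucasW]
    ring

lemma lucasW_not_both (m : ℤ) (hm : 3 ≤ m) (n : ℕ)
    (h1 : lucasW (2 - 2 * m) m n = 1 ∨ lucasW (2 - 2 * m) m n = -1)
    (h2 : lucasW (2 - 2 * m) m (n + 1) = 1 ∨ lucasW (2 - 2 * m) m (n + 1) = -1) : False := by
  have h := lucasW_inv m n
  have hge : 1 ≤ (m ^ 2) ^ n := one_le_pow₀ (by nlinarith)
  have hge2 : 2 * m * (2 * m - 1) * 1 ≤ 2 * m * (2 * m - 1) * (m ^ 2) ^ n :=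
    mul_le_mul_of_nonneg_left hge (by nlinarith)
  rw [← h] at hge2
  rcases h1 with h1 | h1 <;> rcases h2 with h2 | h2 <;> rw [h1, h2] at hge2 <;> nlinarith

open ComplexConjugate in
lemma lucasW_trace (δ γ : ℂ) (T P m : ℤ) (hT : δ + conj δ = T) (hP : γ + conj γ = P)
    (hn : γ * conj γ = m ^ 2) (hδ : δ * conj δ = 2 * m) (hg : δ ^ 2 = 2 * γ) :
    ∀ n, (δ * γ ^ n + conj (δ * γ ^ n) = T * lucasW P m n ∧
      δ * γ ^ (n + 1) + conj (δ * γ ^ (n + 1)) = T * lucasW P m (n + 1))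
  | 0 => by
    have hg' := congrArg conj hg
    simp only [map_mul, map_pow, map_ofNat] at hg'
    refine ⟨by simp [lucasW, hT], ?_⟩
    simp [lucasW]
    rw [← hT, ← hP]
    linear_combination ((conj δ) / 2) * hg + (δ / 2) * hg' - ((δ + conj δ) / 2) * hδ
  | (n + 1) => by
    obtain ⟨h1, h2⟩ := lucasW_trace δ γ T P m hT hP hn hδ hg n
    refine ⟨h2, ?_⟩
    simp only [lucasW]
    simp only [map_mul, map_pow] at h1 h2 ⊢
    push_cast
    rw [← hP, ← hn]
    linear_combination (γ + conj γ) * h2 - (γ * conj γ) * h1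

open ComplexConjugate in
lemma main_step (m : ℤ) (hm : 3 ≤ m) (hmodd : Odd m) (k : ℕ) (hp : (2 * k + 1).Prime)
    (hcl : ¬ (2 * k + 1) ∣ NumberField.classNumber (Qsqrt (1 - 2 * m ^ (2 * k + 1)))) :
    lucasW (2 - 2 * m) m k = 1 ∨ lucasW (2 - 2 * m) m k = -1 := by
  set p := 2 * k + 1 with hpk
  set d : ℤ := 1 - 2 * m ^ p with hd_def
  have hmp : 1 ≤ m ^ p := one_le_pow₀ (by omega)
  have hd : d < 0 := by omega
  have hmpo : Odd (m ^ p) := hmodd.pow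
  have hd4 : d % 4 = 3 := by
    obtain ⟨r, hr⟩ := hmpo
    omega
  have hs := sqrtC_sq d
  have hdC : (d : ℂ) = 1 - 2 * m ^ p := by rw [hd_def]; push_cast; ring
  have hsc := conj_sqrtC_s8 d hd
  have hsm : sqrtC d ∈ Qsqrt d := IntermediateField.mem_adjoin_simple_self ℚ _
  have hsi : IsIntegral ℤ (⟨sqrtC d, hsm⟩ : Qsqrt d) := by
    refine IsIntegral.of_pow (n := 2) (by norm_num) ?_
    have : (⟨sqrtC d, hsm⟩ : Qsqrt d) ^ 2 = (d : Qsqrt d) := by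
      apply Subtype.ext
      simpa using hs
    rw [this]
    exact isIntegral_algebraMap (R := ℤ) (x := d)
  let s : 𝓞 (Qsqrt d) := ⟨⟨sqrtC d, hsm⟩, hsi⟩
  let φ : 𝓞 (Qsqrt d) →+* ℂ := (algebraMap (Qsqrt d) ℂ).comp (algebraMap (𝓞 (Qsqrt d)) (Qsqrt d))
  have hφ : Function.Injective φ :=
    (algebraMap (Qsqrt d) ℂ).injective.comp RingOfIntegers.coe_injective
  have hφs : φ s = sqrtC d := rfl
  have hφm : ∀ x, φ x ∈ Qsqrt d := fun x => (x : Qsqrt d).2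
  have hφi : ∀ x, IsIntegral ℤ (φ x) := fun x =>
    (RingOfIntegers.isIntegral_coe x).map (IsScalarTower.toAlgHom ℤ (Qsqrt d) ℂ)
  have hs2 : s ^ 2 = 1 - 2 * (m : 𝓞 (Qsqrt d)) ^ p := by
    apply hφ
    simp only [map_pow, map_sub, map_mul, map_one, map_intCast, map_ofNat, hφs]
    rw [hs, hdC]
  let b : 𝓞 (Qsqrt d) := 1 - (m : 𝓞 (Qsqrt d)) ^ p + s
  let b' : 𝓞 (Qsqrt d) := 1 - (m : 𝓞 (Qsqrt d)) ^ p - s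
  have hbb : b * b' = ((m : 𝓞 (Qsqrt d)) ^ 2) ^ p := by
    simp only [b, b']
    rw [← pow_mul, mul_comm 2 p, pow_mul]
    linear_combination -hs2
  have hcopZ : IsCoprime (2 * (1 - m ^ p)) ((m ^ 2) ^ p) := by
    apply IsCoprime.mul_left
    · apply IsCoprime.pow_right
      apply IsCoprime.pow_right
      obtain ⟨r, hr⟩ := hmodd
      exact ⟨-r, 1, by rw [hr]; ring⟩
    · rw [← pow_mul, mul_comm 2 p, pow_mul]
      apply IsCoprime.pow_right
      exact ⟨1, 1, by ring⟩
  have hcop : IsCoprime b b' := by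
    obtain ⟨x, y, hxy⟩ := hcopZ
    have hxy' := congrArg (Int.cast : ℤ → 𝓞 (Qsqrt d)) hxy
    push_cast at hxy'
    refine ⟨x + y * b', x, ?_⟩
    rw [← hxy', ← hbb]
    simp only [b, b']
    ring
  have hm0 : (m : ℂ) ≠ 0 := by
    have : m ≠ 0 := by omega
    exact_mod_cast this
  have hb0 : b ≠ 0 := by
    intro h0
    rw [h0, zero_mul] at hbb
    have := congrArg φ hbb
    simp only [map_zero, map_pow, map_intCast] at this
    exact pow_ne_zero _ (pow_ne_zero _ hm0) this.symm
  obtain ⟨u, g0, hug⟩ := exists_unit_mul_pow (Qsqrt d) p hp hcl b b' _ hb0 hcop hbb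
  -- absorb the unit
  have hu4 : (u : 𝓞 (Qsqrt d)) ^ 4 = 1 := by
    apply hφ
    rw [map_pow, map_one]
    refine unit_pow_four d hd hd4 _ (φ (u⁻¹ : (𝓞 (Qsqrt d))ˣ)) (hφm _) (hφm _) (hφi _) (hφi _) ?_
    rw [← map_mul]
    simp
  obtain ⟨g, hg⟩ : ∃ g : 𝓞 (Qsqrt d), b = g ^ p := by
    refine ⟨(u : 𝓞 (Qsqrt d)) ^ p * g0, ?_⟩
    rw [hug, mul_pow, ← pow_mul]
    congr 1
    have : p * p = 4 * (k * k + k) + 1 := by rw [hpk]; ring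
    rw [this, pow_succ, pow_mul, hu4]
    simp
  -- pass to ℂ
  set γ : ℂ := φ g with hγ
  set α : ℂ := 1 + sqrtC d with hα
  have hβ : γ ^ p = 1 - (m : ℂ) ^ p + sqrtC d := by
    have := congrArg φ hg
    simp only [b, map_add, map_sub, map_one, map_pow, map_intCast, hφs] at this
    exact this.symm
  have hα2 : α ^ 2 = 2 * γ ^ p := by
    rw [hβ, hα]; linear_combination hs + hdC
  have hγ0 : γ ≠ 0 := by
    intro h0
    apply hb0
    rw [hg]
    have : g = 0 := hφ (by rw [← hγ, h0, map_zero])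
    rw [this, zero_pow hp.ne_zero]
  set δ : ℂ := α / γ ^ k with hδ
  have hδα : δ * γ ^ k = α := by rw [hδ]; field_simp
  have hδ2 : δ ^ 2 = 2 * γ := by
    rw [hδ, div_pow, hα2, hpk, pow_succ, pow_mul']
    field_simp
  have hγm : γ ∈ Qsqrt d := hφm g
  have hγi : IsIntegral ℤ γ := hφi g
  have hδm : δ ∈ Qsqrt d :=
    div_mem (add_mem (one_mem _) hsm) (pow_mem hγm _)
  have hδi : IsIntegral ℤ δ := by
    refine IsIntegral.of_pow (n := 2) (by norm_num) ?_
    rw [hδ2]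
    exact (by simpa using isIntegral_algebraMap (R := ℤ) (A := ℂ) (x := 2) :
      IsIntegral ℤ (2 : ℂ)).mul hγi
  obtain ⟨T, hT⟩ := exists_trace d hd δ hδm hδi
  obtain ⟨P, hP⟩ := exists_trace d hd γ hγm hγi
  obtain ⟨N, hN0, hN⟩ := exists_norm d hd γ hγm hγi
  obtain ⟨M, hM0, hM⟩ := exists_norm d hd δ hδm hδi
  have hNp : N ^ p = (m ^ 2) ^ p := by
    have : (N : ℂ) ^ p = ((m : ℂ) ^ 2) ^ p := by
      have hβ' := congrArg conj hβ
      simp [hsc] at hβ'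
      rw [← hN, mul_pow, hβ, hβ', ← pow_mul, mul_comm 2 p, pow_mul]
      linear_combination -hs - hdC
    exact_mod_cast this
  have hNm : N = m ^ 2 := by
    exact (pow_left_inj₀ hN0 (sq_nonneg m) hp.ne_zero).1 hNp
  have hN' : γ * conj γ = (m : ℂ) ^ 2 := by rw [hN, hNm]; push_cast; ring
  have hMm : M = 2 * m := by
    have h1 : M ^ 2 = (2 * m) ^ 2 := by
      have : (M : ℂ) ^ 2 = (2 * m) ^ 2 := by
        have hg' := congrArg conj hδ2
        simp only [map_mul, map_pow, map_ofNat] at hg'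
        rw [← hM, mul_pow, hδ2, hg']
        linear_combination 4 * hN'
      exact_mod_cast this
    exact (pow_left_inj₀ hM0 (by omega) two_ne_zero).1 h1
  have hM' : δ * conj δ = 2 * m := by rw [hM, hMm]; push_cast; ring
  have hTP : T ^ 2 = 2 * P + 4 * m := by
    have : (T : ℂ) ^ 2 = 2 * P + 4 * m := by
      have hg' := congrArg conj hδ2
      simp only [map_mul, map_pow, map_ofNat] at hg'
      rw [← hT, ← hP]
      linear_combination hδ2 + hg' + 2 * hM'
    exact_mod_cast this
  have hTe : Even T := by
    have : Even (T ^ 2) := ⟨P + 2 * m, by rw [hTP]; ring⟩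
    exact (Int.even_pow.1 this).1
  have hPe : Even P := by
    obtain ⟨r, rfl⟩ := hTe
    exact ⟨r ^ 2 - m, by linarith⟩
  have hTW : T * lucasW P m k = 2 := by
    have h1 := (lucasW_trace δ γ T P m hT hP hN' hM' hδ2 k).1
    rw [hδα, hα] at h1
    simp [hsc] at h1
    have : (T : ℂ) * lucasW P m k = 2 := by rw [← h1]; ring
    exact_mod_cast this
  have hWo := (lucasW_odd P m hPe hmodd k).1
  have hW : lucasW P m k = 1 ∨ lucasW P m k = -1 := by
    obtain ⟨r, rfl⟩ := hTe
    have : r * lucasW P m k = 1 := by linarith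
    exact Int.isUnit_iff.1 (IsUnit.of_mul_eq_one_right r this)
  have hT4 : T ^ 2 = 4 := by
    rcases hW with h | h <;> rw [h] at hTW <;> nlinarith
  have hPm : P = 2 - 2 * m := by linarith
  rwa [hPm] at hW

/-- If `m ≥ 3` is odd and `p`, `p + 2` are twin primes, then `p` divides the class number of
`ℚ(√(1 - 2 m ^ p))` or `p + 2` divides the class number of `ℚ(√(1 - 2 m ^ (p + 2)))`. -/
theorem twin_primes_dvd_classNumber
    (m : ℤ) (hm : 3 ≤ m) (hmodd : Odd m)
    (p : ℕ) (hp : p.Prime) (hp2 : (p + 2).Prime) :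
    p ∣ NumberField.classNumber (Qsqrt (1 - 2 * m ^ p)) ∨
    (p + 2) ∣ NumberField.classNumber (Qsqrt (1 - 2 * m ^ (p + 2))) := by
  by_contra hcon
  rw [not_or] at hcon
  obtain ⟨h1, h2⟩ := hcon
  have hodd : Odd p := by
    rcases hp.eq_two_or_odd' with h | h
    · subst h; norm_num at hp2
    · exact h
  obtain ⟨k, rfl⟩ := hodd
  have e : 2 * k + 1 + 2 = 2 * (k + 1) + 1 := by ring
  rw [e] at hp2 h2
  exact lucasW_not_both m hm k (main_step m hm hmodd k hp h1)
    (main_step m hm hmodd (k + 1) hp2 h2)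
end

section
/- Let m ≥ 3 be an integer. Then the Diophantine equation (2m − 1)·x² + 1 = 2·m^y has at most 2^{ω(m)−1} solutions in positive integers (x, y), where ω(m) denotes the number of distinct prime divisors of m. -/
/-- The pair of sequences given by `(√c + √(c-1))^(2n+1) = P n √c + Q n √(c-1)`. -/
def PQ (c : ℤ) : ℕ → ℤ × ℤ
  | 0 => (1, 1)
  | n + 1 => ((2 * c - 1) * (PQ c n).1 + 2 * (c - 1) * (PQ c n).2,
      (2 * c - 1) * (PQ c n).2 + 2 * c * (PQ c n).1)

def P (c : ℤ) (n : ℕ) : ℤ := (PQ c n).1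

lemma P_zero (c : ℤ) : P c 0 = 1 := rfl

lemma P_one (c : ℤ) : P c 1 = 4 * c - 3 := by
  simp only [P, PQ]; ring

lemma P_rec (c : ℤ) (n : ℕ) : P c (n + 2) = (4 * c - 2) * P c (n + 1) - P c n := by
  simp only [P, PQ]; ring

lemma P_mono (c : ℤ) (hc : 2 ≤ c) (n : ℕ) : 1 ≤ P c n ∧ P c n + 4 ≤ P c (n + 1) := by
  induction n with
  | zero => rw [P_zero, P_one]; constructor <;> linarith
  | succ n ih =>
    obtain ⟨h1, h2⟩ := ih
    refine ⟨by linarith, ?_⟩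
    rw [P_rec]
    nlinarith

lemma P_lower (c : ℤ) (hc : 2 ≤ c) (n : ℕ) : 4 * (n : ℤ) + 1 ≤ P c n := by
  induction n with
  | zero => simp [P_zero]
  | succ n ih =>
    have := (P_mono c hc n).2
    push_cast; linarith

/-- Expansion modulo `c^2`. -/
lemma P_mod_sq (c : ℤ) (n : ℕ) :
    c ^ 2 ∣ 3 * P c n - (-1) ^ n * ((2 * n + 1) * (3 - 2 * c * (n * (n + 1)))) ∧
    c ^ 2 ∣ 3 * P c (n + 1)
      - (-1) ^ (n + 1) * ((2 * (n + 1) + 1) * (3 - 2 * c * ((n + 1) * (n + 2)))) := by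
  induction n with
  | zero =>
    rw [P_zero, P_one]
    constructor
    · simp
    · simp only [Nat.cast_zero]; ring_nf; simp
  | succ n ih =>
    obtain ⟨⟨a, ha⟩, ⟨b, hb⟩⟩ := ih
    refine ⟨⟨b, by rw [← hb]; push_cast; ring⟩, ?_⟩
    refine ⟨(4 * c - 2) * b - a
      + (-1) ^ (n + 1) * (-(8 : ℤ)) * ((2 * (n + 1) + 1) * ((n + 1) * (n + 2))), ?_⟩
    rw [P_rec]
    have ha' : 3 * P c n = c ^ 2 * a + (-1) ^ n * ((2 * n + 1) * (3 - 2 * c * (n * (n + 1)))) := by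
      linarith
    have hb' : 3 * P c (n + 1) = c ^ 2 * b
      + (-1) ^ (n + 1) * ((2 * (n + 1) + 1) * (3 - 2 * c * ((n + 1) * (n + 2)))) := by
      linarith
    have : 3 * ((4 * c - 2) * P c (n + 1) - P c n)
      = (4 * c - 2) * (3 * P c (n + 1)) - 3 * P c n := by ring
    rw [this, ha', hb']
    push_cast
    ring

lemma P_mod (c : ℤ) (n : ℕ) :
    c ∣ P c n - (-1) ^ n * (2 * n + 1) ∧
    c ∣ P c (n + 1) - (-1) ^ (n + 1) * (2 * (n + 1) + 1) := by
  induction n with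
  | zero =>
    rw [P_zero, P_one]
    constructor
    · simp
    · simp only [Nat.cast_zero]; ring_nf; simp
  | succ n ih =>
    obtain ⟨⟨a, ha⟩, ⟨b, hb⟩⟩ := ih
    refine ⟨⟨b, by rw [← hb]; push_cast; ring⟩, ?_⟩
    refine ⟨4 * P c (n + 1) - 2 * b - a, ?_⟩
    rw [P_rec]
    have ha' : P c n = c * a + (-1) ^ n * (2 * n + 1) := by linarith
    have hb' : P c (n + 1) = c * b + (-1) ^ (n + 1) * (2 * (n + 1) + 1) := by linarith
    rw [ha', hb']
    push_cast
    ring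

open Polynomial in
lemma P_cheb (s : ℝ) (c : ℤ) (hs : s ^ 2 = c) (n : ℕ) :
    (Chebyshev.T ℝ (2 * n + 1)).eval s = s * P c n ∧
    (Chebyshev.T ℝ (2 * n + 3)).eval s = s * P c (n + 1) := by
  have key : ∀ k : ℤ, (Chebyshev.T ℝ (k + 4)).eval s
      = (4 * s ^ 2 - 2) * (Chebyshev.T ℝ (k + 2)).eval s - (Chebyshev.T ℝ k).eval s := by
    intro k
    have h1 := congrArg (eval s) (Chebyshev.T_add_two ℝ k)
    have h2 := congrArg (eval s) (Chebyshev.T_add_two ℝ (k + 1))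
    have h3 := congrArg (eval s) (Chebyshev.T_add_two ℝ (k + 2))
    rw [show k + 1 + 2 = k + 3 by ring, show k + 1 + 1 = k + 2 by ring] at h2
    rw [show k + 2 + 2 = k + 4 by ring, show k + 2 + 1 = k + 3 by ring] at h3
    simp only [eval_sub, eval_mul, eval_X, eval_ofNat] at h1 h2 h3
    rw [h3, h2]
    have : 2 * s * (Chebyshev.T ℝ (k + 1)).eval s
      = (Chebyshev.T ℝ (k + 2)).eval s + (Chebyshev.T ℝ k).eval s := by linarith
    linear_combination -this
  induction n with
  | zero =>
    have h3 := congrArg (eval s) (Chebyshev.T_add_two ℝ 1)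
    simp only [eval_sub, eval_mul, eval_X, eval_ofNat, Chebyshev.T_one] at h3
    norm_num [Chebyshev.T_two] at h3
    rw [P_zero, P_one]
    constructor
    · simp
    · norm_num
      rw [h3, ← hs]; ring
  | succ n ih =>
    obtain ⟨h1, h2⟩ := ih
    refine ⟨by rw [← h2]; congr 2, ?_⟩
    have := key (2 * n + 1)
    rw [show (2 * (n : ℤ) + 1 + 2) = 2 * n + 3 by ring, h1, h2] at this
    rw [show (2 * ((n + 1 : ℕ) : ℤ) + 3) = 2 * n + 1 + 4 by push_cast; ring, this, P_rec, hs]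
    push_cast
    ring

lemma P_comp (c : ℤ) (hc : 2 ≤ c) (i l n : ℕ) (h : 2 * n + 1 = (2 * l + 1) * (2 * i + 1)) :
    P c n = P c i * P (c * P c i ^ 2) l := by
  have hc' : (0 : ℝ) < c := by exact_mod_cast (by linarith : (0 : ℤ) < c)
  set s := Real.sqrt c
  have hs0 : 0 < s := Real.sqrt_pos.mpr hc'
  have hs : s ^ 2 = (c : ℝ) := Real.sq_sqrt hc'.le
  have h1 := (P_cheb s c hs n).1
  have h2 := (P_cheb s c hs i).1
  have h3 := (P_cheb (s * P c i) (c * P c i ^ 2) (by push_cast; rw [mul_pow, hs]) l).1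
  have h4 : (2 * (n : ℤ) + 1) = (2 * l + 1) * (2 * i + 1) := by exact_mod_cast h
  rw [h4, Polynomial.Chebyshev.T_mul, Polynomial.eval_comp, h2, h3] at h1
  have : (s : ℝ) * (P c n - P c i * P (c * P c i ^ 2) l) = 0 := by linarith
  rcases mul_eq_zero.mp this with h | h
  · exact absurd h hs0.ne'
  · have : (P c n : ℝ) = P c i * P (c * P c i ^ 2) l := by linarith
    exact_mod_cast this

/-- Prime-index case. -/
lemma P_prime_index (c : ℤ) (hc : 2 ≤ c) (he : Even c) (l q : ℕ) (hq : q.Prime)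
    (hql : q = 2 * l + 1) (hqc : (q : ℤ) ∣ c) (s : ℕ) (h : P c l = q ^ s) : False := by
  have hl : 1 ≤ l := by have := hq.two_le; omega
  have hlow := P_lower c hc l
  have hq' : (q : ℤ) = 2 * l + 1 := by exact_mod_cast hql
  have hbig : (q : ℤ) < q ^ s := by
    rw [← h]
    have : (1 : ℤ) ≤ l := by exact_mod_cast hl
    linarith
  have hs : 2 ≤ s := by
    by_contra hcon
    have : s = 0 ∨ s = 1 := by omega
    have : (1 : ℤ) < q := by exact_mod_cast hq.one_lt
    rcases ‹s = 0 ∨ s = 1› with rfl | rfl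
    · simp at hbig; omega
    · simp at hbig
  by_cases h3 : l = 1
  · subst h3
    rw [P_one] at h
    simp at hql
    subst hql
    obtain ⟨d, hd⟩ := he
    have h8 : (3 : ℤ) ^ s % 8 = 1 ∨ (3 : ℤ) ^ s % 8 = 3 := by
      clear h hbig hs
      induction s with
      | zero => simp
      | succ s ih => rw [pow_succ]; omega
    push_cast at h
    omega
  · have hqne : q ≠ 3 := by omega
    have hm := (P_mod_sq c l).1
    rw [h, ← hq'] at hm
    have h1 : (q : ℤ) ^ 2 ∣ c ^ 2 := pow_dvd_pow_of_dvd hqc 2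
    have h2 := h1.trans hm
    obtain ⟨d, hd⟩ := hqc
    have h4 : (q : ℤ) ^ 2 ∣ 3 * (q : ℤ) ^ s := Dvd.dvd.mul_left (pow_dvd_pow _ hs) _
    have h5 := (dvd_sub_right h4).mp h2
    have h6 : (q : ℤ) ^ 2 ∣ (-1) ^ l * (q * (3 - 2 * c * (l * (l + 1)))) * (-1) ^ l :=
      Dvd.dvd.mul_right h5 _
    have h7 : (-1 : ℤ) ^ l * (-1) ^ l = 1 := by rw [← mul_pow]; simp
    have h8 : (-1 : ℤ) ^ l * (q * (3 - 2 * c * (l * (l + 1)))) * (-1) ^ l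
        = 3 * q - q ^ 2 * (2 * d * (l * (l + 1))) := by
      rw [hd]; linear_combination (q * (3 - 2 * (q * d) * (l * (l + 1))) : ℤ) * h7
    rw [h8] at h6
    have h9 : (q : ℤ) ^ 2 ∣ 3 * q := (dvd_sub_left (Dvd.intro _ rfl)).mp h6
    have hq0 : (q : ℤ) ≠ 0 := by exact_mod_cast hq.ne_zero
    rw [pow_two] at h9
    have h10 : (q : ℤ) ∣ 3 := (mul_dvd_mul_iff_right hq0).mp h9
    have h11 : q ∣ 3 := by exact_mod_cast h10
    exact hqne ((Nat.prime_dvd_prime_iff_eq hq Nat.prime_three).mp h11)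

lemma prime_dvd_index (c : ℤ) (n r : ℕ) (h : (r : ℤ) ∣ P c n) (hc : (r : ℤ) ∣ c) :
    r ∣ 2 * n + 1 := by
  have h1 := hc.trans (P_mod c n).1
  have h2 := (dvd_sub_right h).mp h1
  have h7 : (-1 : ℤ) ^ n * (-1) ^ n = 1 := by rw [← mul_pow]; simp
  have h3 : (r : ℤ) ∣ (-1) ^ n * (2 * n + 1) * (-1) ^ n := Dvd.dvd.mul_right h2 _
  rw [show (-1 : ℤ) ^ n * (2 * n + 1) * (-1) ^ n = 2 * n + 1 by
    linear_combination (2 * n + 1 : ℤ) * h7] at h3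
  exact_mod_cast h3

lemma P_new_prime (c : ℤ) (hc : 2 ≤ c) (he : Even c) (n : ℕ)
    (h : ∀ r : ℕ, r.Prime → (r : ℤ) ∣ P c n → (r : ℤ) ∣ c) : n = 0 := by
  by_contra hn
  have hn1 : 1 ≤ n := Nat.one_le_iff_ne_zero.mpr hn
  have hlow := P_lower c hc n
  have hn' : (1 : ℤ) ≤ n := by exact_mod_cast hn1
  have hne : (P c n).natAbs ≠ 1 := by omega
  obtain ⟨q, hq, hqd⟩ := Nat.exists_prime_and_dvd hne
  have hqd' : (q : ℤ) ∣ P c n := Int.natCast_dvd.mpr hqd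
  have hqc := h q hq hqd'
  obtain ⟨t, ht⟩ := prime_dvd_index c n q hqd' hqc
  have hodd : Odd (q * t) := ⟨n, ht.symm⟩
  rw [Nat.odd_mul] at hodd
  obtain ⟨⟨l, hl⟩, ⟨i, hi⟩⟩ := hodd
  have hcomp := P_comp c hc i l n (by rw [ht, ← hl, ← hi])
  have hPi := P_mono c hc i
  set c' := c * P c i ^ 2 with hc'
  have hcc' : c ∣ c' := Dvd.intro _ rfl
  have hctwo : 2 ≤ c' := by nlinarith [hPi.1, sq_nonneg (P c i)]
  have hPl : 1 ≤ P c' l := (P_mono c' hctwo l).1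
  have hpow : (P c' l).natAbs = q ^ (P c' l).natAbs.primeFactorsList.length := by
    apply Nat.eq_prime_pow_of_unique_prime_dvd (by omega)
    intro r hr hrd
    have hrd' : (r : ℤ) ∣ P c' l := Int.natCast_dvd.mpr hrd
    have hrc := h r hr (by rw [hcomp]; exact Dvd.dvd.mul_left hrd' _)
    have := prime_dvd_index c' l r hrd' (hrc.trans hcc')
    rw [← hl] at this
    exact (Nat.prime_dvd_prime_iff_eq hr hq).mp this
  refine P_prime_index c' hctwo (he.mul_right _) l q hq hl (hqc.trans hcc')
    (P c' l).natAbs.primeFactorsList.length ?_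
  rw [← Nat.cast_pow, ← hpow]
  omega

/-- Pell descent. -/
lemma pell_descent (c B x1 : ℤ) (hc : 2 ≤ c) (hB : 0 < B) (hx1 : 0 < x1)
    (h1 : c - B * x1 ^ 2 = 1) : ∀ (N : ℕ) (v x : ℤ), v.toNat = N → 0 < v → 0 < x →
    c * v ^ 2 - B * x ^ 2 = 1 → ∃ n, v = (PQ c n).1 ∧ x = x1 * (PQ c n).2 := by
  intro N
  induction N using Nat.strong_induction_on with
  | _ N ih =>
  intro v x hN hv hx h
  by_cases hv1 : v = 1
  · subst hv1
    refine ⟨0, rfl, ?_⟩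
    simp only [PQ, mul_one]
    have h2 : B * x ^ 2 = B * x1 ^ 2 := by linarith
    have h3 := mul_left_cancel₀ hB.ne' h2
    exact (pow_left_inj₀ hx.le hx1.le two_ne_zero).mp h3
  · have hv2 : 2 ≤ v := by omega
    obtain ⟨T, hT⟩ : ∃ T, T = x - v * x1 := ⟨_, rfl⟩
    obtain ⟨U, hU⟩ : ∃ U, U = c * v - x1 * B * x := ⟨_, rfl⟩
    have hTpos : 1 ≤ T := by
      have : v * x1 < x := by
        apply lt_of_pow_lt_pow_left₀ 2 hx.le
        have : B * (v * x1) ^ 2 < B * x ^ 2 := by nlinarith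
        exact lt_of_mul_lt_mul_left this hB.le
      omega
    have hUpos : 0 < U := by
      have : x1 * B * x < c * v := by
        apply lt_of_pow_lt_pow_left₀ 2 (by positivity)
        have e1 : (x1 * B * x) ^ 2 = (c - 1) * (c * v ^ 2 - 1) := by
          have a1 : B * x1 ^ 2 = c - 1 := by linarith
          have a2 : B * x ^ 2 = c * v ^ 2 - 1 := by linarith
          rw [← a1, ← a2]; ring
        rw [e1]; nlinarith
      linarith
    have hpell : U ^ 2 = 1 + c * B * T ^ 2 := by
      rw [hU, hT]
      have a1 : c = 1 + B * x1 ^ 2 := by linarith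
      have a2 : c * v ^ 2 = 1 + B * x ^ 2 := by linarith
      linear_combination (c * v ^ 2 - B * x ^ 2) * a1 + a2
    obtain ⟨v', hv'⟩ : ∃ v', v' = U - T * x1 * B := ⟨_, rfl⟩
    obtain ⟨x', hx'⟩ : ∃ x', x' = T * c - U * x1 := ⟨_, rfl⟩
    have hvpos2 : 0 < v' := by
      have : T * x1 * B < U := by
        apply lt_of_pow_lt_pow_left₀ 2 hUpos.le
        rw [hpell]
        have a1 : c = 1 + B * x1 ^ 2 := by linarith
        rw [a1]
        have : 0 < B * T ^ 2 := by positivity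
        nlinarith
      linarith
    have hxpos2 : 0 < x' := by
      have : U * x1 < T * c := by
        apply lt_of_pow_lt_pow_left₀ 2 (by positivity)
        rw [mul_pow, hpell]
        have a1 : B * x1 ^ 2 = c - 1 := by linarith
        have e1 : (1 + c * B * T ^ 2) * x1 ^ 2 = x1 ^ 2 + c * T ^ 2 * (c - 1) := by
          rw [← a1]; ring
        rw [e1]
        have e2 : x1 ^ 2 < c := by nlinarith [sq_nonneg x1]
        have e4 : 1 ≤ T ^ 2 := one_le_pow₀ hTpos
        have e3 : c ≤ c * T ^ 2 := by nlinarith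
        nlinarith
      linarith
    have hveq : v = (2 * c - 1) * v' + 2 * x1 * B * x' := by
      rw [hv', hx', hU, hT]
      have a1 : c = 1 + B * x1 ^ 2 := by linarith
      rw [a1]; ring
    have hxeq : x = (2 * c - 1) * x' + 2 * x1 * c * v' := by
      rw [hv', hx', hU, hT]
      have a1 : c = 1 + B * x1 ^ 2 := by linarith
      rw [a1]; ring
    have h' : c * v' ^ 2 - B * x' ^ 2 = 1 := by
      rw [hv', hx']
      have e1 : c * (U - T * x1 * B) ^ 2 - B * (T * c - U * x1) ^ 2
        = (c - B * x1 ^ 2) * (U ^ 2 - c * B * T ^ 2) := by ring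
      rw [e1, h1, hpell]; ring
    have hlt : v' < v := by
      have : 0 < x1 * B * x' := by positivity
      nlinarith
    obtain ⟨n, hn1, hn2⟩ := ih v'.toNat (by omega) v' x' rfl hvpos2 hxpos2 h'
    refine ⟨n + 1, ?_, ?_⟩
    · simp only [PQ]
      rw [hveq, hn2, hn1]
      have a1 : c - 1 = B * x1 ^ 2 := by linarith
      rw [a1]; ring
    · simp only [PQ]
      rw [hxeq, hn2, hn1]; ring

lemma stormer (c B x1 v x : ℤ) (hc : 2 ≤ c) (he : Even c) (hB : 0 < B) (hx1 : 0 < x1)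
    (h1 : c - B * x1 ^ 2 = 1) (hv : 0 < v) (hx : 0 < x) (h : c * v ^ 2 - B * x ^ 2 = 1)
    (hp : ∀ r : ℕ, r.Prime → (r : ℤ) ∣ v → (r : ℤ) ∣ c) : v = 1 := by
  obtain ⟨n, hn, -⟩ := pell_descent c B x1 hc hB hx1 h1 _ v x rfl hv hx h
  have hn' : v = P c n := hn
  have := P_new_prime c hc he n (by rw [← hn']; exact hp)
  rw [hn', this, P_zero]

lemma odd_case (m x y : ℕ) (hm : 3 ≤ m) (hx : 0 < x)
    (h : (2 * (m : ℤ) - 1) * (x : ℤ) ^ 2 + 1 = 2 * (m : ℤ) ^ y) (hy : Odd y) : y = 1 := by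
  obtain ⟨k, rfl⟩ := hy
  have hm' : (3 : ℤ) ≤ m := by exact_mod_cast hm
  have hv := stormer (2 * m) (2 * m - 1) 1 (m ^ k) x (by linarith) (even_two_mul _)
    (by linarith) one_pos (by ring) (by positivity) (by exact_mod_cast hx)
    (by rw [← pow_mul]
        have : (2 : ℤ) * m ^ (2 * k + 1) = 2 * m * m ^ (k * 2) := by ring
        linarith)
    (by intro r hr hd
        exact Dvd.dvd.mul_left ((Nat.prime_iff_prime_int.mp hr).dvd_of_dvd_pow hd) _)
  have hv' : m ^ k = 1 := by exact_mod_cast hv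
  have : k = 0 := by
    by_contra hk
    have := Nat.one_lt_pow hk (by omega : 1 < m)
    omega
  omega

lemma even_case (m x y x' y' : ℕ) (hm : 3 ≤ m) (hx : 0 < x) (hx' : 0 < x') (hy0 : 0 < y)
    (h : (2 * (m : ℤ) - 1) * (x : ℤ) ^ 2 + 1 = 2 * (m : ℤ) ^ y)
    (h' : (2 * (m : ℤ) - 1) * (x' : ℤ) ^ 2 + 1 = 2 * (m : ℤ) ^ y')
    (hy : Even y) (hy' : Even y') (hle : y ≤ y') : y = y' := by
  obtain ⟨k, rfl⟩ := hy
  obtain ⟨k', rfl⟩ := hy'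
  obtain ⟨j, rfl⟩ : ∃ j, k' = k + j := ⟨k' - k, by omega⟩
  have hm' : (3 : ℤ) ≤ m := by exact_mod_cast hm
  have hmk : (1 : ℤ) ≤ m ^ (k + k) := one_le_pow₀ (by linarith)
  have hv := stormer (2 * m ^ (k + k)) (2 * m - 1) x (m ^ j) x' (by linarith) (even_two_mul _)
    (by linarith) (by exact_mod_cast hx) (by linarith) (by positivity) (by exact_mod_cast hx')
    (by have : (2 : ℤ) * m ^ (k + j + (k + j)) = 2 * m ^ (k + k) * (m ^ j) ^ 2 := by ring
        linarith)
    (by intro r hr hd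
        exact Dvd.dvd.mul_left (((Nat.prime_iff_prime_int.mp hr).dvd_of_dvd_pow hd).trans
          (dvd_pow_self _ (by omega))) _)
  have hv' : m ^ j = 1 := by exact_mod_cast hv
  have : j = 0 := by
    by_contra hk
    have := Nat.one_lt_pow hk (by omega : 1 < m)
    omega
  omega

lemma two_pow_case (e x y : ℕ) (he : 1 ≤ e) (hx : 0 < x)
    (h : (2 * (2 : ℤ) ^ e - 1) * (x : ℤ) ^ 2 + 1 = 2 * ((2 : ℤ) ^ e) ^ y) (hy : Even y) :
    False := by
  have h1 : (2 ^ (e + 1) - 1 : ℕ) ∣ 2 ^ (e * y + 1) - 1 := by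
    refine ⟨x ^ 2, ?_⟩
    have a1 : 1 ≤ 2 ^ (e + 1) := Nat.one_le_two_pow
    have a2 : 1 ≤ 2 ^ (e * y + 1) := Nat.one_le_two_pow
    zify [a1, a2]
    rw [pow_succ, pow_succ, pow_mul]
    linarith
  have h2 : e + 1 ∣ e * y + 1 := by
    have h3 := Nat.gcd_eq_left h1
    rw [Nat.pow_sub_one_gcd_pow_sub_one] at h3
    have a1 : 1 ≤ 2 ^ (e + 1) := Nat.one_le_two_pow
    have a2 : 1 ≤ 2 ^ ((e + 1).gcd (e * y + 1)) := Nat.one_le_two_pow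
    have h4 : 2 ^ ((e + 1).gcd (e * y + 1)) = 2 ^ (e + 1) := by omega
    have h5 := Nat.pow_right_injective (le_refl 2) h4
    exact Nat.gcd_eq_left_iff_dvd.mp h5
  obtain ⟨r, hr⟩ := h2
  have hodd : Odd ((e + 1) * r) := by
    rw [← hr]; exact (hy.mul_left e).add_one
  obtain ⟨k, hk⟩ := (Nat.odd_mul.mp hodd).2
  have hc : (2 : ℤ) ≤ 2 ^ (e + 1) := by
    have := one_le_pow₀ (n := e) (by norm_num : (1 : ℤ) ≤ 2)
    rw [pow_succ]; linarith
  have hv := stormer (2 ^ (e + 1)) (2 ^ (e + 1) - 1) 1 ((2 ^ (e + 1)) ^ k) x hc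
    (by rw [pow_succ]; exact even_two.mul_left _)
    (by linarith) one_pos (by ring) (by positivity) (by exact_mod_cast hx)
    (by have e1 : (2 : ℤ) ^ (e + 1) * ((2 ^ (e + 1)) ^ k) ^ 2 = (2 ^ (e + 1)) ^ r := by
          rw [hk]; ring
        rw [e1, ← pow_mul, ← hr, pow_succ, pow_succ, pow_mul]
        linarith)
    (by intro p hp hd
        exact (Nat.prime_iff_prime_int.mp hp).dvd_of_dvd_pow hd)
  have hk0 : k = 0 := by
    by_contra hk'
    have := one_lt_pow₀ (by linarith : (1 : ℤ) < 2 ^ (e + 1)) hk'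
    omega
  subst hk0
  have hr1 : r = 1 := by omega
  subst hr1
  have : e * y = e * 1 := by omega
  have := Nat.eq_of_mul_eq_mul_left (by omega) this
  subst this
  exact absurd hy (by decide)

lemma odd_pow_descent (q f : ℕ) (hq : q.Prime) (hq2 : q ≠ 2) (m : ℤ) (hmq : m = (q : ℤ) ^ f)
    (hm : 3 ≤ m) : ∀ (z : ℕ) (c d : ℤ), ¬((q : ℤ) ∣ c ∧ (q : ℤ) ∣ d) →
    (c ^ 2 + (2 * m - 1) * d ^ 2 = 2 * m ^ z → Odd z) ∧
    (c ^ 2 + (2 * m - 1) * d ^ 2 = m ^ z → Even z) := by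
  have hqp : Prime (q : ℤ) := Nat.prime_iff_prime_int.mp hq
  have hqodd : Odd (q : ℤ) := by exact_mod_cast hq.odd_of_ne_two hq2
  have hmodd : Odd m := by rw [hmq]; exact hqodd.pow
  have hq2' : ¬ (q : ℤ) ∣ 2 := by
    intro h
    have : q ∣ 2 := by exact_mod_cast h
    exact hq2 ((Nat.prime_dvd_prime_iff_eq hq Nat.prime_two).mp this)
  have hm0 : m ≠ 0 := by linarith
  intro z
  induction z with
  | zero =>
    intro c d _
    refine ⟨?_, fun _ => Even.zero⟩
    intro h
    exfalso
    rw [pow_zero] at h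
    by_cases hd : d = 0
    · subst hd
      have h2 : c ^ 2 = 2 := by linarith
      have : c < 2 := by nlinarith
      have : -2 < c := by nlinarith
      interval_cases c <;> omega
    · have : 1 ≤ d ^ 2 := by have := sq_pos_of_ne_zero hd; omega
      nlinarith [sq_nonneg c]
  | succ z ih =>
    -- the case `m ∣ c + d`
    have key : ∀ c d : ℤ, ¬((q : ℤ) ∣ c ∧ (q : ℤ) ∣ d) → m ∣ c + d →
        (c ^ 2 + (2 * m - 1) * d ^ 2 = 2 * m ^ (z + 1) → Odd (z + 1)) ∧
        (c ^ 2 + (2 * m - 1) * d ^ 2 = m ^ (z + 1) → Even (z + 1)) := by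
      intro c d hprim ⟨e, he⟩
      have hcd : c = m * e - d := by linarith
      have hqm : ∀ t : ℤ, (q : ℤ) ∣ t → (q : ℤ) ∣ m * t := fun t ht => Dvd.dvd.mul_left ht _
      have hid : c ^ 2 + (2 * m - 1) * d ^ 2 = m * (m * e ^ 2 - 2 * e * d + 2 * d ^ 2) := by
        rw [hcd]; ring
      constructor
      · intro h
        have hpar : Even e := by
          have h1 : Even (c ^ 2 + (2 * m - 1) * d ^ 2) := by rw [h]; exact even_two_mul _
          have h2 : Even (c + d) := by
            rw [Int.even_add] at h1 ⊢
            rw [Int.even_pow' two_ne_zero, Int.even_mul, Int.even_pow' two_ne_zero] at h1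
            have : ¬ Even (2 * m - 1) := by
              rw [Int.not_even_iff_odd]; exact (even_two_mul m).sub_odd odd_one
            tauto
          rw [he, Int.even_mul] at h2
          rcases h2 with h2 | h2
          · exact absurd hmodd (Int.not_odd_iff_even.mpr h2)
          · exact h2
        obtain ⟨e', he'⟩ := hpar
        have hE : e = 2 * e' := by linarith
        have hprim' : ¬((q : ℤ) ∣ (e' - d) ∧ (q : ℤ) ∣ e') := by
          rintro ⟨h1, h2⟩
          have hd : (q : ℤ) ∣ d := (dvd_sub_right h2).mp h1
          exact hprim ⟨by rw [hcd, hE]; exact dvd_sub (hqm _ (Dvd.dvd.mul_left h2 _)) hd, hd⟩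
        have h3 := (ih (e' - d) e' hprim').2
        have h4 : (2 * m) * ((e' - d) ^ 2 + (2 * m - 1) * e' ^ 2) = (2 * m) * m ^ z := by
          rw [hid, hE] at h
          rw [pow_succ] at h
          linear_combination h
        exact (h3 (mul_left_cancel₀ (by positivity) h4)).add_one
      · intro h
        have hprim' : ¬((q : ℤ) ∣ (e - 2 * d) ∧ (q : ℤ) ∣ e) := by
          rintro ⟨h1, h2⟩
          have hd : (q : ℤ) ∣ d :=
            (hqp.dvd_or_dvd ((dvd_sub_right h2).mp h1)).resolve_left hq2'
          exact hprim ⟨by rw [hcd]; exact dvd_sub (hqm _ h2) hd, hd⟩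
        have h3 := (ih (e - 2 * d) e hprim').1
        have h4 : m * ((e - 2 * d) ^ 2 + (2 * m - 1) * e ^ 2) = m * (2 * m ^ z) := by
          rw [hid] at h
          rw [pow_succ] at h
          linear_combination 2 * h
        exact (h3 (mul_left_cancel₀ hm0 h4)).add_one
    intro c d hprim
    by_cases hdiv : m ∣ (c - d) * (c + d)
    · by_cases hq1 : (q : ℤ) ∣ c - d
      · have hq3 : ¬ (q : ℤ) ∣ c + d := by
          intro h
          have h1 : (q : ℤ) ∣ 2 * c := by
            have := dvd_add h hq1; rwa [show c + d + (c - d) = 2 * c by ring] at this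
          have h2 : (q : ℤ) ∣ c := (hqp.dvd_or_dvd h1).resolve_left hq2'
          exact hprim ⟨h2, (dvd_add_right h2).mp h⟩
        have hcop : IsCoprime m (c + d) := by
          rw [hmq]; exact ((Prime.coprime_iff_not_dvd hqp).mpr hq3).pow_left
        have h5 := hcop.dvd_of_dvd_mul_right hdiv
        have := key c (-d) (by rwa [dvd_neg]) (by rwa [← sub_eq_add_neg])
        rwa [neg_sq] at this
      · have hcop : IsCoprime m (c - d) := by
          rw [hmq]; exact ((Prime.coprime_iff_not_dvd hqp).mpr hq1).pow_left
        exact key c d hprim (hcop.dvd_of_dvd_mul_left hdiv)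
    · constructor <;> intro h <;> exfalso <;> apply hdiv
      · exact ⟨2 * m ^ z - 2 * d ^ 2, by rw [pow_succ] at h; linear_combination h⟩
      · exact ⟨m ^ z - 2 * d ^ 2, by rw [pow_succ] at h; linear_combination h⟩

lemma prime_pow_case (m x y : ℕ) (hm : 3 ≤ m) (hx : 0 < x)
    (h : (2 * (m : ℤ) - 1) * (x : ℤ) ^ 2 + 1 = 2 * (m : ℤ) ^ y)
    (hpp : IsPrimePow m) : Odd y := by
  rw [isPrimePow_nat_iff] at hpp
  obtain ⟨q, f, hq, hf, rfl⟩ := hpp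
  by_cases hq2 : q = 2
  · subst hq2
    by_contra hy
    rw [Nat.not_odd_iff_even] at hy
    refine two_pow_case f x y hf hx ?_ hy
    push_cast at h
    exact h
  · refine (odd_pow_descent q f hq hq2 ((q ^ f : ℕ) : ℤ) (by push_cast; rfl)
      (by exact_mod_cast hm) y 1 x ?_).1 ?_
    · rintro ⟨h1, -⟩
      have : q ∣ 1 := by exact_mod_cast h1
      exact hq.one_lt.ne' (Nat.dvd_one.mp this)
    · linarith

/-- For an integer `m ≥ 3`, the Diophantine equation `(2m - 1) x² + 1 = 2 m ^ y` has at most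
`2 ^ (ω(m) - 1)` solutions in positive integers, where `ω(m)` is the number of distinct prime
divisors of `m`. -/
theorem solutions_le_two_pow_omega
    (m : ℕ) (hm : 3 ≤ m) :
    {xy : ℕ × ℕ | 0 < xy.1 ∧ 0 < xy.2 ∧
      (2 * m - 1) * xy.1 ^ 2 + 1 = 2 * m ^ xy.2}.Finite ∧
    {xy : ℕ × ℕ | 0 < xy.1 ∧ 0 < xy.2 ∧
      (2 * m - 1) * xy.1 ^ 2 + 1 = 2 * m ^ xy.2}.ncard ≤
        2 ^ (m.primeFactors.card - 1) := by
  set S := {xy : ℕ × ℕ | 0 < xy.1 ∧ 0 < xy.2 ∧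
      (2 * m - 1) * xy.1 ^ 2 + 1 = 2 * m ^ xy.2} with hS
  have hcast : ∀ x y : ℕ, (2 * m - 1) * x ^ 2 + 1 = 2 * m ^ y →
      (2 * (m : ℤ) - 1) * (x : ℤ) ^ 2 + 1 = 2 * (m : ℤ) ^ y := by
    intro x y h
    have h1 : 1 ≤ 2 * m := by omega
    zify [h1] at h
    exact h
  have hxeq : ∀ x x' y : ℕ, (2 * m - 1) * x ^ 2 + 1 = 2 * m ^ y →
      (2 * m - 1) * x' ^ 2 + 1 = 2 * m ^ y → x = x' := by
    intro x x' y h h'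
    have h1 : (2 * m - 1) * x ^ 2 = (2 * m - 1) * x' ^ 2 := by omega
    have h2 := Nat.eq_of_mul_eq_mul_left (by omega) h1
    exact Nat.pow_left_injective two_ne_zero h2
  have hinj : Set.InjOn (fun xy : ℕ × ℕ => xy.2 % 2) S := by
    rintro ⟨x, y⟩ ⟨hx, hy, h⟩ ⟨x', y'⟩ ⟨hx', hy', h'⟩ hmod
    simp only at hx hy h hx' hy' h' hmod
    have hyy : y = y' := by
      rcases Nat.even_or_odd y with ho | ho
      · have ho' : Even y' := by rw [Nat.even_iff] at ho ⊢; omega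
        rcases le_total y y' with hle | hle
        · exact even_case m x y x' y' hm hx hx' hy (hcast _ _ h) (hcast _ _ h') ho ho' hle
        · exact (even_case m x' y' x y hm hx' hx hy' (hcast _ _ h') (hcast _ _ h) ho' ho hle).symm
      · have ho' : Odd y' := by rw [Nat.odd_iff] at ho ⊢; omega
        rw [odd_case m x y hm hx (hcast _ _ h) ho, odd_case m x' y' hm hx' (hcast _ _ h') ho']
    subst hyy
    rw [hxeq x x' y h h']
  have hmaps : Set.MapsTo (fun xy : ℕ × ℕ => xy.2 % 2) S ((Finset.range 2 : Finset ℕ) : Set ℕ) := by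
    intro xy _
    simp only [Finset.coe_range, Set.mem_Iio]
    exact Nat.mod_lt _ two_pos
  have hfin : S.Finite := Set.Finite.of_injOn hmaps hinj (Finset.finite_toSet _)
  refine ⟨hfin, ?_⟩
  by_cases hw : 2 ≤ m.primeFactors.card
  · have h1 := Set.ncard_le_ncard_of_injOn _ hmaps hinj (Finset.finite_toSet _)
    rw [Set.ncard_coe_finset, Finset.card_range] at h1
    calc S.ncard ≤ 2 ^ 1 := by simpa using h1
      _ ≤ 2 ^ (m.primeFactors.card - 1) := Nat.pow_le_pow_right two_pos (by omega)
  · have hpos : 0 < m.primeFactors.card := by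
      rw [Finset.card_pos, Nat.nonempty_primeFactors]; omega
    have hpp : IsPrimePow m := by
      rw [isPrimePow_iff_card_primeFactors_eq_one]; omega
    have hsub : S ⊆ {(1, 1)} := by
      rintro ⟨x, y⟩ ⟨hx, hy, h⟩
      simp only at hx hy h
      have h1 := odd_case m x y hm hx (hcast _ _ h) (prime_pow_case m x y hm hx (hcast _ _ h) hpp)
      subst h1
      rw [hxeq x 1 1 h (by simp; omega)]
      rfl
    have h2 := Set.ncard_le_ncard hsub
    rw [Set.ncard_singleton] at h2
    exact h2.trans Nat.one_le_two_pow
end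

section
/- Let m ≥ 3 be an odd integer. Then for all but finitely many odd primes p, neither 2^{(p−1)/2}·(1 + √(1 − 2m^p)) nor −2^{(p−1)/2}·(1 + √(1 − 2m^p)) is a p-th power of an element of the ring of integers of the imaginary quadratic field K_p = ℚ(√(1 − 2m^p)). That is, the set of odd primes p for which there exists β in the ring of integers of K_p with β^p = ±2^{(p−1)/2}·(1 + √(1 − 2m^p)) is finite. -/
open Polynomial NumberField

/-- The element `√d` of `ℚ(√d)`. -/
noncomputable def sqrtElem (d : ℤ) : Qsqrt d :=
  ⟨sqrtC d, IntermediateField.mem_adjoin_simple_self ℚ (sqrtC d)⟩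

lemma aux_re_intCast_mul {d : ℤ} (n : ℤ) (x : ℤ√d) : ((n : ℤ√d) * x).re = n * x.re := by
  simp [Zsqrtd.re_mul]

lemma aux_claim1 {R : Type*} [CommRing R] (z : R) (r : ℕ) :
    ∃ y : R, (1 + z) ^ r = 1 + r * z + z ^ 2 * y := by
  induction r with
  | zero => exact ⟨0, by simp⟩
  | succ n ih =>
    obtain ⟨y, hy⟩ := ih
    refine ⟨n + y * (1 + z), ?_⟩
    rw [pow_succ, hy]; push_cast; ring

lemma aux_claim2 {R : Type*} [CommRing R] (s η : R) (r' v : ℕ) :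
    ∃ ξ : R, (1 + 4 * s * η) ^ (2 ^ v * r') =
      1 + 4 * s * (2 ^ v * r') * η + 8 * s ^ 2 * 2 ^ v * ξ := by
  induction v with
  | zero =>
    obtain ⟨y, hy⟩ := aux_claim1 (4 * s * η) r'
    refine ⟨2 * η ^ 2 * y, ?_⟩
    simp only [pow_zero, one_mul]
    rw [hy]; ring
  | succ v ih =>
    obtain ⟨ξ, hξ⟩ := ih
    refine ⟨ξ + 2 ^ v * (r' * η + 2 * s * ξ) ^ 2, ?_⟩
    rw [show 2 ^ (v + 1) * r' = (2 ^ v * r') * 2 by ring, pow_mul, hξ]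
    ring

lemma aux_dvd (a m : ℤ) (k : ℕ) :
    a ∣ ((⟨a, 1⟩ : ℤ√(a ^ 2 - 2 * m)) * ⟨a ^ 2 - m, a⟩ ^ k).re := by
  induction k with
  | zero => simp
  | succ n ih =>
    rw [pow_succ (_ : ℤ√(a ^ 2 - 2 * m)), ← mul_assoc, Zsqrtd.re_mul]
    exact dvd_add (ih.mul_right _) (Dvd.intro_left _ rfl)

lemma aux_mod5 (r : ℕ) :
    ((⟨1, 1⟩ : ℤ√(-5)) * ⟨-2, 1⟩ ^ (2 * r + 1)).re % 5 = 2 ∨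
    ((⟨1, 1⟩ : ℤ√(-5)) * ⟨-2, 1⟩ ^ (2 * r + 1)).re % 5 = 3 := by
  induction r with
  | zero => simp [Zsqrtd.re_mul]
  | succ n ih =>
    rw [show 2 * (n + 1) + 1 = (2 * n + 1) + 2 by ring, pow_add, ← mul_assoc, Zsqrtd.re_mul]
    have h1 : ((⟨-2, 1⟩ : ℤ√(-5)) ^ 2).re = -1 := by simp [pow_two, Zsqrtd.re_mul]
    have h2 : ((⟨-2, 1⟩ : ℤ√(-5)) ^ 2).im = -4 := by simp [pow_two, Zsqrtd.im_mul]
    rw [h1, h2]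
    omega

lemma aux_one (s : ℤ) (hs : 1 ≤ s) (k : ℕ) (hk : k ≠ 0)
    (h : ((⟨1, 1⟩ : ℤ√(-(4 * s + 1))) * ⟨-2 * s, 1⟩ ^ k).re = 1 ∨
      ((⟨1, 1⟩ : ℤ√(-(4 * s + 1))) * ⟨-2 * s, 1⟩ ^ k).re = -1) : False := by
  set η : ℤ√(-(4 * s + 1)) := ⟨1 - s, 1⟩ with hη
  have hsq : (⟨-2 * s, 1⟩ : ℤ√(-(4 * s + 1))) ^ 2 = -1 * (1 + 4 * (s : ℤ√(-(4 * s + 1))) * η) := by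
    have : (4 : ℤ√(-(4 * s + 1))) * (s : ℤ√(-(4 * s + 1))) = ((4 * s : ℤ) : ℤ√(-(4 * s + 1))) := by
      push_cast; rfl
    rw [this, hη]
    ext
    · simp [pow_two, Zsqrtd.re_mul]; ring
    · simp [pow_two, Zsqrtd.im_mul]; ring
  have key : ∀ (r : ℕ) (x : ℤ√(-(4 * s + 1))),
      ∃ X : ℤ, (x * (1 + 4 * (s : ℤ√(-(4 * s + 1))) * η) ^ r).re = x.re + 4 * s * X := by
    intro r x
    obtain ⟨y, hy⟩ := aux_claim1 (4 * (s : ℤ√(-(4 * s + 1))) * η) r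
    refine ⟨(x * (r * η + 4 * s * η ^ 2 * y)).re, ?_⟩
    have : x * (1 + 4 * (s : ℤ√(-(4 * s + 1))) * η) ^ r =
        x + ((4 * s : ℤ) : ℤ√(-(4 * s + 1))) * (x * (r * η + 4 * s * η ^ 2 * y)) := by
      rw [hy]; push_cast; ring
    rw [this, Zsqrtd.re_add, aux_re_intCast_mul]
  have sgn : ∀ (r : ℕ) (x : ℤ√(-(4 * s + 1))), x.re = 1 ∨ x.re = -1 →
      (((-1) ^ r * x).re = 1 ∨ ((-1) ^ r * x).re = -1) := by
    intro r x hx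
    rcases neg_one_pow_eq_or (ℤ√(-(4 * s + 1))) r with h | h <;> rw [h]
    · simpa using hx
    · simp only [neg_mul, one_mul, Zsqrtd.re_neg]; omega
  obtain ⟨r, hr | hr⟩ := Nat.even_or_odd' k
  · have hr0 : r ≠ 0 := by omega
    have h' := sgn r _ h
    have e : (-1) ^ r * ((⟨1, 1⟩ : ℤ√(-(4 * s + 1))) * ⟨-2 * s, 1⟩ ^ k) =
        ⟨1, 1⟩ * (1 + 4 * (s : ℤ√(-(4 * s + 1))) * η) ^ r := by
      rw [hr, pow_mul, hsq, mul_pow, mul_left_comm, ← mul_assoc ((-1) ^ r), ← mul_pow]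
      simp
    rw [e] at h'
    have h1 : ((⟨1, 1⟩ : ℤ√(-(4 * s + 1))) * (1 + 4 * (s : ℤ√(-(4 * s + 1))) * η) ^ r).re = 1 := by
      rcases h' with h' | h'
      · exact h'
      · exfalso
        obtain ⟨X, hX⟩ := key r ⟨1, 1⟩
        rw [hX] at h'
        simp only at h'
        have : 2 * (s * X) = -1 := by linarith
        omega
    obtain ⟨v, r', hr', hrv⟩ := Nat.exists_eq_two_pow_mul_odd hr0
    obtain ⟨ξ, hξ⟩ := aux_claim2 (s : ℤ√(-(4 * s + 1))) η r' v
    rw [hrv, hξ] at h1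
    have e2 : (⟨1, 1⟩ : ℤ√(-(4 * s + 1))) * (1 + 4 * s * (2 ^ v * r') * η + 8 * s ^ 2 * 2 ^ v * ξ) =
       ⟨1, 1⟩ + ((4 * s * (2 ^ v * r') : ℤ) : ℤ√(-(4 * s + 1))) * (⟨1, 1⟩ * η) +
        ((8 * s ^ 2 * 2 ^ v : ℤ) : ℤ√(-(4 * s + 1))) * (⟨1, 1⟩ * ξ) := by
      push_cast; ring
    rw [e2, Zsqrtd.re_add, Zsqrtd.re_add, aux_re_intCast_mul, aux_re_intCast_mul] at h1
    have e3 : ((⟨1, 1⟩ : ℤ√(-(4 * s + 1))) * η).re = -5 * s := by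
      simp [hη, Zsqrtd.re_mul]; ring
    rw [e3] at h1
    set X := ((⟨1, 1⟩ : ℤ√(-(4 * s + 1))) * ξ).re
    simp only at h1
    have h2 : (4 * s ^ 2 * 2 ^ v) * (2 * X - 5 * r') = 0 := by linarith
    have h3 : (4 * s ^ 2 * 2 ^ v : ℤ) ≠ 0 := by positivity
    have h4 := (mul_eq_zero.mp h2).resolve_left h3
    obtain ⟨q, hq⟩ := hr'
    omega
  · have h' := sgn r _ h
    have e : (-1) ^ r * ((⟨1, 1⟩ : ℤ√(-(4 * s + 1))) * ⟨-2 * s, 1⟩ ^ k) =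
        (⟨1, 1⟩ * ⟨-2 * s, 1⟩) * (1 + 4 * (s : ℤ√(-(4 * s + 1))) * η) ^ r := by
      rw [hr, pow_succ, pow_mul, hsq, mul_pow]
      have : ((-1 : ℤ√(-(4 * s + 1))) ^ r) * (-1) ^ r = 1 := by rw [← mul_pow]; simp
      linear_combination (⟨1, 1⟩ * ⟨-2 * s, 1⟩) * (1 + 4 * (s : ℤ√(-(4 * s + 1))) * η) ^ r * this
    rw [e] at h'
    obtain ⟨X, hX⟩ := key r (⟨1, 1⟩ * ⟨-2 * s, 1⟩)
    have e3 : ((⟨1, 1⟩ : ℤ√(-(4 * s + 1))) * ⟨-2 * s, 1⟩).re = -1 - 6 * s := by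
      simp [Zsqrtd.re_mul]; ring
    rw [hX, e3] at h'
    rcases h' with h' | h'
    · have : s ∣ 1 := ⟨2 * X - 3, by linarith⟩
      have hs1 : s = 1 := by
        have := Int.le_of_dvd one_pos this
        omega
      subst hs1
      have := aux_mod5 r
      rw [← hr] at this
      norm_num at h this
      omega
    · have : s * (2 * X - 3) = 0 := by linarith
      rcases mul_eq_zero.mp this with h | h <;> omega

lemma aux_conj (d c : ℤ) (k : ℕ) :
    ((⟨-1, 1⟩ : ℤ√d) * ⟨c, -1⟩ ^ k).re = -((⟨1, 1⟩ : ℤ√d) * ⟨c, 1⟩ ^ k).re := by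
  have h1 : (⟨-1, 1⟩ : ℤ√d) = -star ⟨1, 1⟩ := by ext <;> simp
  have h2 : (⟨c, -1⟩ : ℤ√d) = star ⟨c, 1⟩ := by ext <;> simp
  rw [h1, h2, ← star_pow, neg_mul, ← star_mul', Zsqrtd.re_neg, Zsqrtd.re_star]

lemma aux_main (a m : ℤ) (hm : 3 ≤ m) (hmodd : Odd m) (k : ℕ) (hk : k ≠ 0)
    (h : ((⟨a, 1⟩ : ℤ√(a ^ 2 - 2 * m)) * ⟨a ^ 2 - m, a⟩ ^ k).re = 1 ∨
      ((⟨a, 1⟩ : ℤ√(a ^ 2 - 2 * m)) * ⟨a ^ 2 - m, a⟩ ^ k).re = -1) : False := by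
  have hd := aux_dvd a m k
  have ha : a = 1 ∨ a = -1 := by
    apply Int.isUnit_iff.mp
    apply isUnit_of_dvd_unit hd
    exact Int.isUnit_iff.mpr h
  obtain ⟨s, hs⟩ := hmodd
  have key := aux_one s (by omega) k hk
  rcases ha with rfl | rfl
  · apply key
    have e1 : (1 : ℤ) ^ 2 - 2 * m = -(4 * s + 1) := by rw [hs]; ring
    have e2 : (1 : ℤ) ^ 2 - m = -2 * s := by rw [hs]; ring
    rw [e1, e2] at h
    exact h
  · apply key
    have e1 : (-1 : ℤ) ^ 2 - 2 * m = -(4 * s + 1) := by rw [hs]; ring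
    have e2 : (-1 : ℤ) ^ 2 - m = -2 * s := by rw [hs]; ring
    rw [e1, e2, aux_conj] at h
    omega

lemma aux_re_sqrt (w : ℂ) (d : ℝ) (hd : d < 0) (h : w ^ 2 = d) : w.re = 0 := by
  have h1 := congrArg Complex.re h
  have h2 := congrArg Complex.im h
  simp [pow_two] at h1 h2
  have : w.re * w.im = 0 := by linarith
  rcases mul_eq_zero.mp this with h | h
  · exact h
  · rw [h] at h1; nlinarith [mul_self_nonneg w.re]

lemma aux_form (d : ℤ) (hd : d < 0) (b : ℂ) (hb : b ∈ Qsqrt d) :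
    ∃ x y : ℚ, b = x + y * sqrtC d := by
  have hw := sqrtC_sq d
  induction hb using IntermediateField.adjoin_induction with
  | mem x hx =>
    rw [Set.mem_singleton_iff] at hx
    exact ⟨0, 1, by simp [hx]⟩
  | algebraMap x => exact ⟨x, 0, by simp⟩
  | add x y _ _ hx hy =>
    obtain ⟨a, b, rfl⟩ := hx
    obtain ⟨a', b', rfl⟩ := hy
    exact ⟨a + a', b + b', by push_cast; ring⟩
  | mul x y _ _ hx hy =>
    obtain ⟨a, b, rfl⟩ := hx
    obtain ⟨a', b', rfl⟩ := hy
    refine ⟨a * a' + b * b' * d, a * b' + a' * b, ?_⟩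
    push_cast
    linear_combination (b * b' : ℂ) * hw
  | inv x _ hx =>
    obtain ⟨a, b, rfl⟩ := hx
    by_cases hN : a ^ 2 - d * b ^ 2 = 0
    · have hd' : (d : ℚ) < 0 := by exact_mod_cast hd
      have hb : b = 0 := by
        by_contra hb
        have : 0 < b ^ 2 := by positivity
        nlinarith [sq_nonneg a]
      have ha : a = 0 := by simpa [hb] using hN
      exact ⟨0, 0, by simp [ha, hb]⟩
    · refine ⟨a / (a ^ 2 - d * b ^ 2), -b / (a ^ 2 - d * b ^ 2), ?_⟩
      have hN' : ((a : ℂ) ^ 2 - d * b ^ 2) ≠ 0 := by exact_mod_cast hN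
      apply inv_eq_of_mul_eq_one_right
      push_cast
      rw [show ((a : ℂ) + b * sqrtC d) * (a / ((a : ℂ) ^ 2 - d * b ^ 2) +
          -b / ((a : ℂ) ^ 2 - d * b ^ 2) * sqrtC d) =
          ((a : ℂ) ^ 2 - sqrtC d ^ 2 * b ^ 2) / ((a : ℂ) ^ 2 - d * b ^ 2) by ring, hw]
      exact div_self hN'

lemma aux_odd (b : ℂ) (t m : ℤ) (ht : Odd t) (h2 : (b : ℂ) ^ 2 = t * b - 2 * m)
    (hre : 2 * b.re = t) (n : ℕ) :
    (∃ u : ℤ, Odd u ∧ 2 * (b ^ (n + 1)).re = u) ∧ (∃ u : ℤ, Odd u ∧ 2 * (b ^ (n + 2)).re = u) := by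
  have hrec : ∀ n, b ^ (n + 2) = ((t : ℝ) : ℂ) * b ^ (n + 1) - ((2 * m : ℝ) : ℂ) * b ^ n := by
    intro n; push_cast; rw [pow_add, h2]; ring
  induction n with
  | zero =>
    refine ⟨⟨t, ht, by simpa using hre⟩, ⟨t ^ 2 - 4 * m, ?_, ?_⟩⟩
    · exact (ht.pow).sub_even ⟨2 * m, by ring⟩
    · rw [hrec, Complex.sub_re, Complex.re_ofReal_mul, Complex.re_ofReal_mul]
      simp
      linear_combination (t : ℝ) * hre
  | succ n ih =>
    obtain ⟨⟨u, hu, hu'⟩, ⟨v, hv, hv'⟩⟩ := ih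
    refine ⟨⟨v, hv, hv'⟩, ⟨t * v - 2 * m * u, ?_, ?_⟩⟩
    · exact (ht.mul hv).sub_even ⟨m * u, by ring⟩
    · rw [hrec, Complex.sub_re, Complex.re_ofReal_mul, Complex.re_ofReal_mul]
      push_cast
      linear_combination (t : ℝ) * hv' - 2 * (m : ℝ) * hu'

lemma aux_complex (b : ℂ) (t m : ℤ) (hm : 3 ≤ m) (hmodd : Odd m) (k : ℕ) (hk : k ≠ 0)
    (hre : 2 * b.re = t) (hN : Complex.normSq b = 2 * m)
    (h : (b ^ (2 * k + 1)).re = 2 ^ k ∨ (b ^ (2 * k + 1)).re = - 2 ^ k) : False := by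
  have h2 : b ^ 2 = t * b - 2 * m := by
    have e1 : (t : ℂ) = b + (starRingEnd ℂ) b := by
      rw [Complex.add_conj]; exact_mod_cast congrArg (Complex.ofReal) hre.symm
    have e2 : (2 * m : ℂ) = b * (starRingEnd ℂ) b := by
      rw [Complex.mul_conj, hN]; push_cast; rfl
    rw [e1, e2]; ring
  rcases Int.even_or_odd' t with ⟨a, ha | ha⟩
  · have har : b.re = a := by rw [ha] at hre; push_cast at hre; linarith
    have hw : (b - a) * (b - a) = ((a ^ 2 - 2 * m : ℤ) : ℂ) := by
      rw [ha] at h2; push_cast at h2 ⊢; linear_combination h2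
    let φ := Zsqrtd.lift (R := ℂ) ⟨b - a, hw⟩
    have hφ : ∀ z : ℤ√(a ^ 2 - 2 * m), φ z = z.re + z.im * (b - a) := fun z => rfl
    have hφre : ∀ z : ℤ√(a ^ 2 - 2 * m), (φ z).re = z.re := by
      intro z; rw [hφ]; simp [har]
    have e1 : φ ⟨a, 1⟩ = b := by rw [hφ]; simp
    have e2 : 2 * φ ⟨a ^ 2 - m, a⟩ = b ^ 2 := by
      rw [hφ, h2, ha]; push_cast; ring
    have e3 : b ^ (2 * k + 1) =
        ((2 ^ k : ℝ) : ℂ) * φ ((⟨a, 1⟩ : ℤ√(a ^ 2 - 2 * m)) * ⟨a ^ 2 - m, a⟩ ^ k) := by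
      rw [map_mul, map_pow, e1, pow_succ, pow_mul, ← e2, mul_pow]; push_cast; ring
    rw [e3, Complex.re_ofReal_mul, hφre] at h
    apply aux_main a m hm hmodd k hk
    have h2k : (2 ^ k : ℝ) ≠ 0 := by positivity
    rcases h with h | h
    · left
      have : (2 ^ k : ℝ) * ((((⟨a, 1⟩ : ℤ√(a ^ 2 - 2 * m)) * ⟨a ^ 2 - m, a⟩ ^ k).re : ℤ) : ℝ)
        = 2 ^ k * 1 := by rw [h, mul_one]
      exact_mod_cast mul_left_cancel₀ h2k this
    · right
      have : (2 ^ k : ℝ) * ((((⟨a, 1⟩ : ℤ√(a ^ 2 - 2 * m)) * ⟨a ^ 2 - m, a⟩ ^ k).re : ℤ) : ℝ)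
        = 2 ^ k * (-1) := by rw [h]; ring
      exact_mod_cast mul_left_cancel₀ h2k this
  · obtain ⟨⟨u, hu, hu'⟩, -⟩ := aux_odd b t m ⟨a, ha⟩ h2 hre (2 * k)
    obtain ⟨q, hq⟩ := hu
    rcases h with h | h
    · rw [h] at hu'
      have : (2 : ℤ) * 2 ^ k = u := by exact_mod_cast hu'
      omega
    · rw [h] at hu'
      have : (2 : ℤ) * (-2 ^ k) = u := by exact_mod_cast hu'
      omega

/-- For an odd integer `m ≥ 3`, for all but finitely many odd primes `p`, neither
`2 ^ ((p-1)/2) (1 + √(1 - 2 m ^ p))` nor its negative is a `p`-th power of an element of the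
ring of integers of `ℚ(√(1 - 2 m ^ p))`. -/
theorem finitely_many_primes_pth_power
    (m : ℤ) (hm : 3 ≤ m) (hmodd : Odd m) :
    {p : ℕ | p.Prime ∧ Odd p ∧
      ∃ β : 𝓞 (Qsqrt (1 - 2 * m ^ p)),
        (β : Qsqrt (1 - 2 * m ^ p)) ^ p =
            2 ^ ((p - 1) / 2) * (1 + sqrtElem (1 - 2 * m ^ p)) ∨
        (β : Qsqrt (1 - 2 * m ^ p)) ^ p =
            -(2 ^ ((p - 1) / 2) * (1 + sqrtElem (1 - 2 * m ^ p)))}.Finite := by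
  convert Set.finite_empty
  rw [Set.eq_empty_iff_forall_notMem]
  rintro p ⟨hp, ⟨k, hk⟩, β, hβ⟩
  have hk0 : k ≠ 0 := by
    rintro rfl; simp at hk; subst hk; exact Nat.not_prime_one hp
  have hk2 : (p - 1) / 2 = k := by omega
  rw [hk2] at hβ
  have hmp : 1 ≤ m ^ p := one_le_pow₀ (by omega)
  have hd : 1 - 2 * m ^ p < 0 := by omega
  generalize hD : 1 - 2 * m ^ p = D at *
  set b : ℂ := ((β : Qsqrt D) : ℂ) with hb
  have hw := sqrtC_sq D
  have hwre : (sqrtC D).re = 0 :=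
    aux_re_sqrt _ (D : ℝ) (by exact_mod_cast hd) (by rw [hw]; simp)
  have hb' : b ^ p = ((2 ^ k : ℝ) : ℂ) * (1 + sqrtC D) ∨
      b ^ p = -(((2 ^ k : ℝ) : ℂ) * (1 + sqrtC D)) := by
    have hc2 : ((2 : Qsqrt D) : ℂ) = 2 := rfl
    rcases hβ with h | h
    · left
      have := congrArg (fun z : Qsqrt D => (z : ℂ)) h
      simpa [sqrtElem, hc2] using this
    · right
      have := congrArg (fun z : Qsqrt D => (z : ℂ)) h
      simpa [sqrtElem, hc2] using this
  obtain ⟨x, y, hxy⟩ := aux_form D hd b (β : Qsqrt D).2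
  have hbre : b.re = x := by rw [hxy]; simp [hwre]
  have hint : IsIntegral ℤ b := by
    have := (RingOfIntegers.isIntegral_coe β)
    exact this.map (Qsqrt D).val.toRingHom.toIntAlgHom
  have hint2 : IsIntegral ℤ ((starRingEnd ℂ) b) :=
    hint.map (starRingEnd ℂ).toIntAlgHom
  have hx : IsIntegral ℤ (2 * x) := by
    have h1 := hint.add hint2
    rw [Complex.add_conj, hbre] at h1
    have h2 : (((2 * (x : ℝ) : ℝ)) : ℂ) = algebraMap ℚ ℂ (2 * x) := by simp
    rw [h2] at h1
    exact (isIntegral_algebraMap_iff (algebraMap ℚ ℂ).injective).mp h1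
  obtain ⟨t, ht⟩ := IsIntegrallyClosed.isIntegral_iff.mp hx
  have hre : 2 * b.re = t := by
    rw [hbre]
    have : (t : ℚ) = 2 * x := by simpa using ht
    exact_mod_cast this.symm
  have hnw : Complex.normSq (1 + sqrtC D) = 2 * m ^ p := by
    have h1 := congrArg Complex.re hw
    simp [pow_two, hwre] at h1
    rw [Complex.normSq_apply]
    simp [hwre]
    have : (1 - 2 * m ^ p : ℝ) = D := by exact_mod_cast hD
    linarith
  have hN : Complex.normSq b = 2 * m := by
    have h1 : Complex.normSq b ^ p = (2 * m) ^ p := by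
      rw [← map_pow]
      have : Complex.normSq (b ^ p) = Complex.normSq (((2 ^ k : ℝ) : ℂ) * (1 + sqrtC D)) := by
        rcases hb' with h | h <;> rw [h]
        rw [Complex.normSq_neg]
      rw [this, map_mul, hnw, Complex.normSq_ofReal, mul_pow, hk]
      ring
    have hm0 : (0 : ℝ) ≤ 2 * m := by
      have : (3 : ℝ) ≤ m := by exact_mod_cast hm
      linarith
    exact (pow_left_inj₀ (Complex.normSq_nonneg b) hm0 hp.ne_zero).mp h1
  apply aux_complex b t m hm hmodd k hk0 hre hN
  rw [← hk]
  rcases hb' with h | h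
  · left; rw [h, Complex.re_ofReal_mul]; simp [hwre]
  · right; rw [h, Complex.neg_re, Complex.re_ofReal_mul]; simp [hwre]
end
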